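/- arXiv:2103.13521 — 2 statements merged into one kernel-verified Lean document; each statement's English description precedes it below -/
import Mathlib

section
/- If a probability distribution P over variables (X_v)_{v∈V} is path-stable, then P satisfies the uniqueness property: any two maximal directed ancestral graphs with skeleton sk(P), w.r.t. each of which P satisfies ordered upward- and downward-stability, are Markov equivalent. -/
open MeasureTheory ProbabilityTheory

/-! ## Mixed graphs, m-separation, and related graphical notions -/

/-- A mixed graph with arrows (`i → j`) and bidirected arcs (`i ↔ j`). -/
structure MixedGraph (V : Type) where
  arrow : V → V → Prop
  arc : V → V → Prop

namespace MixedGraph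

variable {V : Type} (G : MixedGraph V)

/-- `G.anc i j` : `i` is an ancestor of `j`, i.e. there is a directed path from `i` to `j`. -/
def anc (i j : V) : Prop := Relation.TransGen G.arrow i j

/-- Adjacency: there is some edge between `i` and `j`. -/
def adj (i j : V) : Prop := G.arrow i j ∨ G.arrow j i ∨ G.arc i j

/-- A directed ancestral graph: a simple mixed graph with arrows and arcs, no directed
cycle, and no arc one of whose endpoints is an ancestor of the other. -/
def IsDirectedAncestral : Prop :=
  (∀ i j, G.arc i j ↔ G.arc j i) ∧
  (∀ i, ¬ G.arc i i) ∧
  (∀ i j, ¬ (G.arrow i j ∧ G.arrow j i)) ∧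
  (∀ i j, ¬ (G.arrow i j ∧ G.arc i j)) ∧
  (∀ i, ¬ G.anc i i) ∧
  (∀ i j, G.arc i j → ¬ G.anc i j ∧ ¬ G.anc j i)

/-- A DAG: only arrows, and no directed cycle. -/
def IsDAG : Prop := (∀ i j, ¬ G.arc i j) ∧ (∀ i, ¬ G.anc i i)

/-- There is an edge between `i` and `j` with an arrowhead at `j`. -/
def headInto (i j : V) : Prop := G.arrow i j ∨ G.arc i j

/-- The inner node `b` of a tripath `⟨a,b,c⟩` is a collider. -/
def collider (a b c : V) : Prop := G.headInto a b ∧ G.headInto c b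

/-- The list of nodes `p` is a path which is connecting given `C` : consecutive nodes are
adjacent, no node is repeated, every collider inner node is in `C` or an ancestor of a node
in `C`, and every non-collider inner node is not in `C`. -/
def Connecting (C : Set V) (p : List V) : Prop :=
  p.Nodup ∧ p.Chain' G.adj ∧
  ∀ t, 0 < t → ∀ (h1 : t - 1 < p.length) (h2 : t < p.length) (h3 : t + 1 < p.length),
    (G.collider (p.get ⟨t-1, h1⟩) (p.get ⟨t, h2⟩) (p.get ⟨t+1, h3⟩) →
      p.get ⟨t, h2⟩ ∈ C ∨ ∃ c ∈ C, G.anc (p.get ⟨t, h2⟩) c) ∧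
    (¬ G.collider (p.get ⟨t-1, h1⟩) (p.get ⟨t, h2⟩) (p.get ⟨t+1, h3⟩) →
      p.get ⟨t, h2⟩ ∉ C)

/-- m-separation : `A ⊥ B | C` in `G` iff there is no connecting path between `A` and `B`
given `C`. -/
def mSep (A B C : Set V) : Prop :=
  ¬ ∃ p : List V, G.Connecting C p ∧
      (∃ a ∈ A, p.head? = some a) ∧ (∃ b ∈ B, p.getLast? = some b)

/-- Two graphs are Markov equivalent if they induce the same independence model by
m-separation. -/
def MarkovEquiv (H : MixedGraph V) : Prop :=
  ∀ A B C : Set V, Disjoint A B → Disjoint A C → Disjoint B C →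
    (G.mSep A B C ↔ H.mSep A B C)

/-- `G` is maximal: every pair of non-adjacent nodes is separated given some set. -/
def Maximal : Prop :=
  ∀ i j : V, i ≠ j → ¬ G.adj i j → ∃ C : Set V, i ∉ C ∧ j ∉ C ∧ G.mSep {i} {j} C

/-- `an(i,j) = (an(i) ∪ an(j)) \ {i,j}`. -/
def anSet (i j : V) : Set V :=
  {k | (G.anc k i ∨ G.anc k j) ∧ k ≠ i ∧ k ≠ j}

/-- The strict form of the minimal order of `G` : `a < b` iff `b` is an ancestor of `a`. -/
def minLt (a b : V) : Prop := G.anc b a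

end MixedGraph

/-! ## Abstract (singleton) independence relations and stability conditions -/

section IndependenceRelations

variable {V : Type}

/-- Ordered upward-stability of a singleton independence relation `ci` w.r.t. the strict
partial order `lt`. -/
def UpStab (lt : V → V → Prop) (ci : V → V → Set V → Prop) : Prop :=
  ∀ i j (C : Set V), i ≠ j → i ∉ C → j ∉ C → ci i j C →
    ∀ k, k ≠ i → k ≠ j → (lt i k ∨ lt j k) → ci i j (C ∪ {k})

/-- Ordered downward-stability of a singleton independence relation `ci` w.r.t. the strict
partial order `lt`. -/
def DownStab (lt : V → V → Prop) (ci : V → V → Set V → Prop) : Prop :=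
  ∀ i j (C : Set V), i ≠ j → i ∉ C → j ∉ C → ci i j C →
    ∀ k, ¬ lt i k → ¬ lt j k → (∀ l ∈ C \ {k}, ¬ lt l k) → ci i j (C \ {k})

/-- The skeleton of an independence relation: `i` and `j` are adjacent iff there is no `C`
with `⟨i,j|C⟩` an independence. -/
def skP (ci : V → V → Set V → Prop) (i j : V) : Prop :=
  i ≠ j ∧ ¬ ∃ C : Set V, i ∉ C ∧ j ∉ C ∧ ci i j C

/-- An output of a natural constraint-based structure-learning algorithm: a graph `H` whose
skeleton is the skeleton of the independence relation `ci`, obtained by directing the edges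
of that skeleton according to a `P`-compatible partial order (given here by its strict form
`lt`, required to coincide with the minimal order of `H`), w.r.t. which ordered upward- and
downward-stability hold. -/
def NaturalOutput (ci : V → V → Set V → Prop) (H : MixedGraph V) : Prop :=
  (∀ i j, H.adj i j ↔ skP ci i j) ∧
  ∃ lt : V → V → Prop, Irreflexive lt ∧ Transitive lt ∧
    (∀ i j, H.arrow i j ↔ (skP ci i j ∧ lt j i)) ∧
    (∀ i j, H.arc i j ↔ (skP ci i j ∧ ¬ lt i j ∧ ¬ lt j i)) ∧
    (∀ a b, lt a b ↔ H.minLt a b) ∧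
    UpStab lt ci ∧ DownStab lt ci

/-- Singleton-transitivity. -/
def SingletonTransitive (ci : V → V → Set V → Prop) : Prop :=
  ∀ i j k (C : Set V), i ≠ j → i ≠ k → j ≠ k → i ∉ C → j ∉ C → k ∉ C →
    ci i j C → ci i j (C ∪ {k}) → ci i k C ∨ ci j k C

/-- `ci` is V-unstable : there is a V-configuration `⟨i,k,j⟩` in the skeleton of `ci` and a
set `C` disjoint from `{i,j,k}` with `⟨i,j|C⟩` and `⟨i,j|C∪{k}⟩` independencies. -/
def VUnstable (ci : V → V → Set V → Prop) : Prop :=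
  ∃ i k j : V, ∃ C : Set V, i ≠ j ∧ i ≠ k ∧ j ≠ k ∧
    skP ci i k ∧ skP ci k j ∧ ¬ skP ci i j ∧
    i ∉ C ∧ j ∉ C ∧ k ∉ C ∧ ci i j C ∧ ci i j (C ∪ {k})

def VStable (ci : V → V → Set V → Prop) : Prop := ¬ VUnstable ci

/-- `ci` is path-unstable : there is a path `⟨i, i₁, …, i_r, k, j⟩` in the skeleton of `ci`
with `i,j` non-adjacent and every `i_n` adjacent to `j`, and a set `C` disjoint from
`{i,j,k}`, such that `⟨i,j | U∪C⟩` and `⟨i,j | U∪C∪{k}⟩` are independencies, where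
`U = {i₁,…,i_r}`. -/
def PathUnstable (ci : V → V → Set V → Prop) : Prop :=
  ∃ (i k j : V) (is : List V) (C : Set V),
    (i :: (is ++ [k, j])).Nodup ∧
    (i :: (is ++ [k, j])).Chain' (skP ci) ∧
    ¬ skP ci i j ∧
    (∀ m ∈ is, skP ci m j) ∧
    i ∉ C ∧ j ∉ C ∧ k ∉ C ∧
    ci i j ({m | m ∈ is} ∪ C) ∧ ci i j (({m | m ∈ is} ∪ C) ∪ {k})

def PathStable (ci : V → V → Set V → Prop) : Prop := ¬ PathUnstable ci

/-- The uniqueness property: all maximal directed ancestral graphs with the skeleton of `ci`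
w.r.t. (the minimal order of) which `ci` satisfies ordered upward- and downward-stability
are Markov equivalent. -/
def UniquenessProp (ci : V → V → Set V → Prop) : Prop :=
  ∀ H1 H2 : MixedGraph V,
    H1.IsDirectedAncestral → H1.Maximal → (∀ i j, H1.adj i j ↔ skP ci i j) →
      UpStab H1.minLt ci → DownStab H1.minLt ci →
    H2.IsDirectedAncestral → H2.Maximal → (∀ i j, H2.adj i j ↔ skP ci i j) →
      UpStab H2.minLt ci → DownStab H2.minLt ci →
    H1.MarkovEquiv H2

/-- The DAG-uniqueness property: all DAGs with the skeleton of `ci` w.r.t. which `ci`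
satisfies ordered upward- and downward-stability are Markov equivalent. -/
def DAGUniquenessProp (ci : V → V → Set V → Prop) : Prop :=
  ∀ H1 H2 : MixedGraph V,
    H1.IsDAG → (∀ i j, H1.adj i j ↔ skP ci i j) →
      UpStab H1.minLt ci → DownStab H1.minLt ci →
    H2.IsDAG → (∀ i j, H2.adj i j ↔ skP ci i j) →
      UpStab H2.minLt ci → DownStab H2.minLt ci →
    H1.MarkovEquiv H2

end IndependenceRelations

/-! ## Probabilistic conditional independence of collections of variables -/

section Probabilistic

variable {V : Type} {Ω : Type} [MeasurableSpace Ω]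
  {𝓧 : V → Type}

/-- The tuple of variables `X_A`. -/
def restrictVars (X : ∀ v, Ω → 𝓧 v) (A : Set V) : Ω → ∀ a : A, 𝓧 a :=
  fun ω a => X a ω

variable [StandardBorelSpace Ω] [Nonempty Ω] [∀ v, MeasurableSpace (𝓧 v)]

theorem measurable_restrictVars {X : ∀ v, Ω → 𝓧 v} (hX : ∀ v, Measurable (X v))
    (A : Set V) : Measurable (restrictVars X A) :=
  measurable_pi_lambda _ fun a => hX a

/-- `⟨A,B|C⟩ ∈ J(P)` : the tuple `X_A` is conditionally independent of `X_B` given `X_C`. -/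
def CI (μ : Measure Ω) [IsFiniteMeasure μ] (X : ∀ v, Ω → 𝓧 v)
    (hX : ∀ v, Measurable (X v)) (A B C : Set V) : Prop :=
  CondIndepFun (MeasurableSpace.comap (restrictVars X C) MeasurableSpace.pi)
    (Measurable.comap_le (measurable_restrictVars hX C))
    (restrictVars X A) (restrictVars X B) μ

/-- Singleton conditional independence `i ⫫ j | C`. -/
def ciP (μ : Measure Ω) [IsFiniteMeasure μ] (X : ∀ v, Ω → 𝓧 v)
    (hX : ∀ v, Measurable (X v)) (i j : V) (C : Set V) : Prop :=
  CI μ X hX {i} {j} C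

/-- `P` is Markovian to `G` : `J(G) ⊆ J(P)`. -/
def Markovian (μ : Measure Ω) [IsFiniteMeasure μ] (X : ∀ v, Ω → 𝓧 v)
    (hX : ∀ v, Measurable (X v)) (G : MixedGraph V) : Prop :=
  ∀ A B C : Set V, Disjoint A B → Disjoint A C → Disjoint B C →
    G.mSep A B C → CI μ X hX A B C

/-- `P` and `G` are faithful : `J(G) = J(P)`. -/
def Faithful (μ : Measure Ω) [IsFiniteMeasure μ] (X : ∀ v, Ω → 𝓧 v)
    (hX : ∀ v, Measurable (X v)) (G : MixedGraph V) : Prop :=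
  ∀ A B C : Set V, Disjoint A B → Disjoint A C → Disjoint B C →
    (G.mSep A B C ↔ CI μ X hX A B C)

/-- `P` is converse pairwise Markovian to `G`. -/
def ConvPairwiseMarkov (μ : Measure Ω) [IsFiniteMeasure μ] (X : ∀ v, Ω → 𝓧 v)
    (hX : ∀ v, Measurable (X v)) (G : MixedGraph V) : Prop :=
  ∀ i j : V, i ≠ j → ciP μ X hX i j (G.anSet i j) → ¬ G.adj i j

end Probabilistic

/-!
Path-stability forces two graphs `G` and `H` of the uniqueness property to agree on the last node
of a discriminating path once the inner nodes are colliders in both: it is a collider if and only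
if it is not an ancestor of the end nodes, and if it were an ancestor in one graph only, then
upward- and downward-stability would make the end nodes independent both given a set of ancestors
and given that set enlarged by the node, which is path-instability.

If `A` and `B` are connected given `C` in `G`, choose a connecting path of least weight, where
deleting nodes or replacing them by a descendant of one of them lowers the weight. On it, every
inner node is the last node of a discriminating path all of whose inner nodes are colliders in
`C`, for otherwise a shortcut would exist. Two such discriminating paths cannot run through each
other's last nodes in opposite directions, so an extremal choice shows that `G` and `H` have the
same colliders on the path. Finally, a collider with an arrow in `G` towards an ancestor of `C`
has that arrow in `H` as well, for otherwise the path could be rerouted through the arrow's head.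
Hence the path is connecting in `H`.
-/

/-! ### Edges, ancestors and active nodes -/

namespace MixedGraph

variable {V : Type} {G : MixedGraph V} {C : Set V} {a b c d p q r x : V}

theorem anc_of_arrow (h : G.arrow a b) : G.anc a b := Relation.TransGen.single h

theorem anc_trans (h₁ : G.anc a b) (h₂ : G.anc b c) : G.anc a c := Relation.TransGen.trans h₁ h₂

theorem adj_of_arrow (h : G.arrow a b) : G.adj a b := Or.inl h

theorem adj_of_headInto (h : G.headInto a b) : G.adj a b :=
  h.elim Or.inl fun h => Or.inr (Or.inr h)

theorem headInto_or_arrow_of_adj (h : G.adj a b) : G.headInto a b ∨ G.arrow b a := by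
  rcases h with h | h | h
  · exact Or.inl (Or.inl h)
  · exact Or.inr h
  · exact Or.inl (Or.inr h)

theorem collider_comm : G.collider a b c ↔ G.collider c b a := and_comm

/-- The ancestral closure of `C`: the nodes that lie in `C` or are ancestors of a node in `C`. -/
def an (G : MixedGraph V) (C : Set V) : Set V := {b | b ∈ C ∨ ∃ c ∈ C, G.anc b c}

theorem subset_an : C ⊆ G.an C := fun _ => Or.inl

theorem mem_an_of_anc (h : G.anc a b) (hb : b ∈ G.an C) : a ∈ G.an C := by
  rcases hb with hb | ⟨c, hc, hbc⟩
  · exact Or.inr ⟨b, hb, h⟩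
  · exact Or.inr ⟨c, hc, anc_trans h hbc⟩

theorem mem_an_of_arrow (h : G.arrow a b) (hb : b ∈ G.an C) : a ∈ G.an C :=
  mem_an_of_anc (anc_of_arrow h) hb

theorem exists_arrow_of_mem_an (ha : a ∈ G.an C) (haC : a ∉ C) : ∃ b ∈ G.an C, G.arrow a b := by
  obtain ⟨c, hc, hac⟩ := ha.resolve_left haC
  obtain ⟨b, hab, hbc⟩ := Relation.TransGen.head'_iff.1 hac
  rcases Relation.reflTransGen_iff_eq_or_transGen.1 hbc with rfl | hbc
  · exact ⟨c, subset_an hc, hab⟩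
  · exact ⟨b, Or.inr ⟨c, hc, hbc⟩, hab⟩

namespace IsDirectedAncestral

variable (hG : G.IsDirectedAncestral)
include hG

theorem not_anc_self : ¬ G.anc a a := hG.2.2.2.2.1 a

theorem not_headInto_of_anc (h : G.anc a b) : ¬ G.headInto b a := by
  rintro (hba | hba)
  · exact hG.not_anc_self (h.tail hba)
  · exact (hG.2.2.2.2.2 b a hba).2 h

theorem not_headInto_of_arrow (h : G.arrow a b) : ¬ G.headInto b a :=
  hG.not_headInto_of_anc (anc_of_arrow h)

theorem adj_symm (h : G.adj a b) : G.adj b a := by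
  rcases h with h | h | h
  · exact Or.inr (Or.inl h)
  · exact Or.inl h
  · exact Or.inr (Or.inr ((hG.1 a b).1 h))

theorem ne_of_adj (h : G.adj a b) : a ≠ b := by
  rintro rfl
  rcases h with h | h | h
  · exact hG.not_anc_self (anc_of_arrow h)
  · exact hG.not_anc_self (anc_of_arrow h)
  · exact hG.2.1 a h

theorem arrow_of_anc_of_adj (h : G.anc a b) (hab : G.adj a b) : G.arrow a b :=
  (headInto_or_arrow_of_adj (hG.adj_symm hab)).resolve_left (hG.not_headInto_of_anc h)

theorem headInto_of_arrow_of_adj (hdc : G.headInto d c) (hca : G.arrow c a) (hda : G.adj d a) :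
    G.headInto d a :=
  (headInto_or_arrow_of_adj hda).resolve_right fun had =>
    hG.not_headInto_of_anc (anc_trans (anc_of_arrow hca) (anc_of_arrow had)) hdc

end IsDirectedAncestral

/-- The condition that a connecting path given `C` imposes on an inner node `b` with neighbours
`a` and `c` on the path. -/
def Active (G : MixedGraph V) (C : Set V) (a b c : V) : Prop :=
  (G.collider a b c → b ∈ G.an C) ∧ (¬ G.collider a b c → b ∉ C)

theorem Active.symm (h : G.Active C a b c) : G.Active C c b a := by
  rwa [Active, collider_comm]

theorem Active.collider_of_mem (h : G.Active C a b c) (hb : b ∈ C) : G.collider a b c :=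
  of_not_not fun h' => h.2 h' hb

theorem active_congr_left (h : G.headInto a b ↔ G.headInto d b) :
    G.Active C a b c ↔ G.Active C d b c := by
  simp only [Active, collider, h]

theorem active_of_collider (h : G.collider a b c) (hb : b ∈ G.an C) : G.Active C a b c :=
  ⟨fun _ => hb, fun h' => absurd h h'⟩

theorem active_of_not_collider (h : ¬ G.collider a b c) (hb : b ∉ C) : G.Active C a b c :=
  ⟨fun h' => absurd h' h, fun _ => hb⟩

theorem active_of_mem_an (hb : b ∈ G.an C) (h : b ∈ C → G.collider a b c) : G.Active C a b c :=
  ⟨fun _ => hb, fun hc hbC => hc (h hbC)⟩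

theorem IsDirectedAncestral.mem_and_arrow_and_collider_of_not_active (hG : G.IsDirectedAncestral)
    (hpqr : G.Active C p q r) (hxqr : ¬ G.Active C x q r) (hpq : G.adj p q) (hxq : G.adj x q)
    (hxp : G.adj x p) (hxpq : G.headInto x p → G.Active C x p q) :
    q ∈ C ∧ G.arrow q x ∧ G.collider p q r := by
  by_cases hxc : G.headInto x q
  · have hpc : ¬ G.headInto p q := fun h => hxqr ((active_congr_left (by simp [h, hxc])).1 hpqr)
    have hqp : G.arrow q p := (headInto_or_arrow_of_adj hpq).resolve_left hpc
    have hxp' : G.headInto x p := hG.headInto_of_arrow_of_adj hxc hqp hxp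
    have hp : p ∈ G.an C := (hxpq hxp').1 ⟨hxp', Or.inl hqp⟩
    have hqC : q ∉ C := hpqr.2 fun h => hpc h.1
    exact absurd ⟨fun _ => mem_an_of_arrow hqp hp, fun _ => hqC⟩ hxqr
  · have hq : q ∈ C := by
      by_contra hq
      exact hxqr (active_of_not_collider (fun h => hxc h.1) hq)
    exact ⟨hq, (headInto_or_arrow_of_adj hxq).resolve_left hxc, hpqr.collider_of_mem hq⟩

end MixedGraph

/-! ### Connecting paths -/

namespace MixedGraph

variable {V : Type} {G : MixedGraph V} {A B C : Set V} {a b x : V} {l m n r : ℕ} {v w : ℕ → V}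

/-- A path `v 0, …, v n` that is connecting given `C`, encoded by a function on `ℕ` whose values
beyond `n` are irrelevant. -/
structure IsConnecting (G : MixedGraph V) (C : Set V) (n : ℕ) (v : ℕ → V) : Prop where
  injOn : Set.InjOn v (Set.Iic n)
  adj : ∀ u < n, G.adj (v u) (v (u + 1))
  active : ∀ s, 0 < s → s < n → G.Active C (v (s - 1)) (v s) (v (s + 1))

namespace IsConnecting

theorem eq_of_eq (h : G.IsConnecting C n v) {s t : ℕ} (hs : s ≤ n) (ht : t ≤ n)
    (hst : v s = v t) : s = t := h.injOn hs ht hst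

theorem connecting (h : G.IsConnecting C n v) : G.Connecting C ((List.range (n + 1)).map v) := by
  refine ⟨List.Nodup.map_on ?_ List.nodup_range, List.isChain_iff_getElem.2 ?_, ?_⟩
  · intro s hs t ht hst
    rw [List.mem_range] at hs ht
    exact h.eq_of_eq (by lia) (by lia) hst
  · intro u hu
    rw [List.length_map, List.length_range] at hu
    simpa only [List.getElem_map, List.getElem_range] using h.adj u (by lia)
  · intro s hs _ _ hs'
    rw [List.length_map, List.length_range] at hs'
    simp only [List.get_eq_getElem, List.getElem_map, List.getElem_range]
    exact h.active s hs (by lia)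

theorem reverse (h : G.IsConnecting C n v) (hG : G.IsDirectedAncestral) :
    G.IsConnecting C n fun u => v (n - u) where
  injOn s hs t ht hst := by
    have := h.eq_of_eq (by lia) (by lia) hst
    simp only [Set.mem_Iic] at hs ht
    lia
  adj u hu := by
    have := hG.adj_symm (h.adj (n - (u + 1)) (by lia))
    rwa [show n - (u + 1) + 1 = n - u by lia] at this
  active s hs hsn := by
    have := (h.active (n - s) (by lia) (by lia)).symm
    rwa [show n - s + 1 = n - (s - 1) by lia, show n - s - 1 = n - (s + 1) by lia] at this

theorem take (h : G.IsConnecting C n v) (hl : l ≤ n) : G.IsConnecting C l v where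
  injOn := h.injOn.mono (Set.Iic_subset_Iic.2 hl)
  adj u hu := h.adj u (by lia)
  active s hs hsl := h.active s hs (by lia)

theorem drop (h : G.IsConnecting C n v) (hr : r ≤ n) :
    G.IsConnecting C (n - r) fun u => v (r + u) where
  injOn s hs t ht hst := by
    simp only [Set.mem_Iic] at hs ht
    have := h.eq_of_eq (by lia) (by lia) hst
    lia
  adj u hu := h.adj (r + u) (by lia)
  active s hs hsn := by
    have := h.active (r + s) (by lia) (by lia)
    rwa [show r + s - 1 = r + (s - 1) by lia] at this

end IsConnecting

theorem mSep_iff :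
    G.mSep A B C ↔ ¬ ∃ n v, G.IsConnecting C n v ∧ v 0 ∈ A ∧ v n ∈ B := by
  refine not_congr ⟨?_, ?_⟩
  · rintro ⟨p, ⟨hnodup, hchain, hactive⟩, ⟨a, ha, hpa⟩, ⟨b, hb, hpb⟩⟩
    have hp : 0 < p.length := List.length_pos_of_ne_nil (by rintro rfl; simp at hpa)
    have hget : ∀ u (hu : u < p.length), p.getD u a = p[u] :=
      fun u hu => List.getD_eq_getElem _ _ hu
    refine ⟨p.length - 1, fun u => p.getD u a, ⟨?_, ?_, ?_⟩, ?_, ?_⟩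
    · intro s hs t ht hst
      simp only [Set.mem_Iic] at hs ht
      simp only [hget s (by lia), hget t (by lia)] at hst
      exact (List.Nodup.getElem_inj_iff hnodup).1 hst
    · intro u hu
      simp only [hget u (by lia), hget (u + 1) (by lia)]
      exact List.isChain_iff_getElem.1 hchain u (by lia)
    · intro s hs hsp
      simp only [hget (s - 1) (by lia), hget s (by lia), hget (s + 1) (by lia)]
      exact hactive s hs (by lia) (by lia) (by lia)
    · rw [List.head?_eq_getElem?] at hpa
      simpa only [List.getD_eq_getElem?_getD, hpa, Option.getD_some] using ha
    · rw [List.getLast?_eq_getElem?] at hpb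
      simpa only [List.getD_eq_getElem?_getD, hpb, Option.getD_some] using hb
  · rintro ⟨n, v, h, ha, hb⟩
    exact ⟨_, h.connecting, ⟨v 0, ha, by simp [List.head?_eq_getElem?]⟩,
      ⟨v n, hb, by simp [List.getLast?_eq_getElem?]⟩⟩

/-- The concatenation of the path `v 0, …, v l` with the path `w`, which starts at index `l + 1`. -/
def join (l : ℕ) (v w : ℕ → V) : ℕ → V := fun u => if u ≤ l then v u else w (u - (l + 1))

theorem join_left {u : ℕ} (hu : u ≤ l) : join l v w u = v u := if_pos hu

theorem join_right {u : ℕ} : join l v w (l + 1 + u) = w u := by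
  rw [join, if_neg (by lia), Nat.add_sub_cancel_left]

theorem IsConnecting.append (hv : G.IsConnecting C l v) (hw : G.IsConnecting C m w)
    (hdisj : ∀ s ≤ l, ∀ t ≤ m, v s ≠ w t) (hadj : G.adj (v l) (w 0))
    (hvw : 0 < l → G.Active C (v (l - 1)) (v l) (w 0))
    (hwv : 0 < m → G.Active C (v l) (w 0) (w 1)) :
    G.IsConnecting C (l + 1 + m) (join l v w) where
  injOn s hs t ht hst := by
    simp only [Set.mem_Iic] at hs ht
    rcases le_or_gt s l with hsl | hsl <;> rcases le_or_gt t l with htl | htl <;>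
      simp only [join, hsl, htl, not_le_of_gt, if_true, if_false] at hst
    · exact hv.eq_of_eq hsl htl hst
    · exact absurd hst (hdisj _ hsl _ (by lia))
    · exact absurd hst.symm (hdisj _ htl _ (by lia))
    · have := hw.eq_of_eq (by lia) (by lia) hst
      lia
  adj u hu := by
    rcases lt_trichotomy u l with hul | rfl | hul
    · rw [join_left hul.le, join_left hul]
      exact hv.adj u hul
    · rw [join_left le_rfl, ← Nat.add_zero (u + 1), join_right]
      exact hadj
    · obtain ⟨u, rfl⟩ := Nat.exists_eq_add_of_le hul
      rw [Nat.succ_eq_add_one, join_right, add_assoc, join_right]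
      exact hw.adj u (by lia)
  active s hs hsn := by
    rcases lt_trichotomy s l with hsl | rfl | hsl
    · rw [join_left (by lia), join_left hsl.le, join_left hsl]
      exact hv.active s hs hsl
    · rw [join_left (by lia), join_left le_rfl, ← Nat.add_zero (s + 1), join_right]
      exact hvw hs
    · obtain ⟨s, rfl⟩ := Nat.exists_eq_add_of_le hsl
      rw [Nat.succ_eq_add_one, join_right, add_assoc (l + 1), join_right]
      rcases s with _ | s
      · rw [join_left (by lia)]
        exact hwv (by lia)
      · rw [show l + 1 + (s + 1) - 1 = l + 1 + s by lia, join_right]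
        exact hw.active (s + 1) (by lia) (by lia)

theorem isConnecting_zero : G.IsConnecting C 0 fun _ => a where
  injOn s hs t ht _ := by
    simp only [Set.mem_Iic] at hs ht
    lia
  adj u hu := absurd hu (by lia)
  active s _ hs := absurd hs (by lia)

/-- The path `x, v 0, v 1, …`. -/
def cons (x : V) (v : ℕ → V) : ℕ → V := join 0 (fun _ => x) v

theorem cons_succ {u : ℕ} : cons x v (u + 1) = v u := by
  rw [cons, show u + 1 = 0 + 1 + u by lia, join_right]

theorem IsConnecting.cons (h : G.IsConnecting C n v) (hx : ∀ u ≤ n, x ≠ v u)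
    (hadj : G.adj x (v 0)) (hactive : 0 < n → G.Active C x (v 0) (v 1)) :
    G.IsConnecting C (n + 1) (cons x v) := by
  rw [show n + 1 = 0 + 1 + n by lia]
  exact isConnecting_zero.append h (fun _ _ => hx) hadj (fun h => absurd h (lt_irrefl 0)) hactive

theorem exists_isConnecting_of_anc (hG : G.IsDirectedAncestral) (h : G.anc a b)
    (ha : a ∉ G.an C) :
    ∃ n v, G.IsConnecting C (n + 1) v ∧ v 0 = a ∧ v (n + 1) = b ∧
      (∀ u ≤ n, G.anc a (v (u + 1))) ∧ G.arrow a (v 1) := by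
  induction h using Relation.TransGen.head_induction_on with
  | @single a hab =>
    refine ⟨0, cons a fun _ => b, isConnecting_zero.cons (fun _ _ => ?_) (adj_of_arrow hab)
      (fun h => absurd h (lt_irrefl 0)), rfl, rfl, fun _ _ => anc_of_arrow ?_, hab⟩
    · exact hG.ne_of_adj (adj_of_arrow hab)
    · rwa [cons_succ]
  | @head a c hac _ ih =>
    obtain ⟨n, v, hv, rfl, hb, hanc, hv1⟩ := ih fun hc => ha (mem_an_of_arrow hac hc)
    have hcC : v 0 ∉ C := fun hc => ha (mem_an_of_arrow hac (subset_an hc))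
    have hav : ∀ u ≤ n + 1, G.anc a (v u) := by
      rintro (_ | u) hu
      · exact anc_of_arrow hac
      · exact anc_trans (anc_of_arrow hac) (hanc u (by lia))
    refine ⟨n + 1, cons a v, hv.cons (fun u hu hau => ?_) (adj_of_arrow hac) (fun _ => ?_), rfl,
      cons_succ.trans hb, fun u hu => ?_, hac⟩
    · exact hG.not_anc_self (hau ▸ hav u hu)
    · exact active_of_not_collider (fun h => hG.not_headInto_of_arrow hv1 h.2) hcC
    · rw [cons_succ]
      exact hav u hu

end MixedGraph

/-! ### Discriminating paths -/

namespace MixedGraph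

variable {V : Type} {G : MixedGraph V} {C : Set V} {R : V → V → Prop} {j : V} {k : ℕ} {w : ℕ → V}

/-- A path `w 0, …, w (k + 1)` in the adjacency relation `R` off a node `j` that is adjacent to all
of its nodes except the last one. -/
structure IsFan (R : V → V → Prop) (j : V) (k : ℕ) (w : ℕ → V) : Prop where
  injOn : Set.InjOn w (Set.Iic (k + 1))
  chain : ∀ u ≤ k, R (w u) (w (u + 1))
  apex : ∀ u ≤ k, R (w u) j
  not_apex : ¬ R (w (k + 1)) j
  ne_apex : ∀ u ≤ k + 1, w u ≠ j

theorem IsFan.ne_last (h : IsFan R j k w) {u : ℕ} (hu : u ≤ k) : w u ≠ w (k + 1) := fun h' => by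
  have := h.injOn (Set.mem_Iic.2 (by lia)) (Set.mem_Iic.2 le_rfl) h'
  lia

theorem IsFan.tail (h : IsFan R j (k + 1) w) : IsFan R j k fun u => w (u + 1) where
  injOn s hs t ht hst := by
    simp only [Set.mem_Iic] at hs ht
    have := h.injOn (Set.mem_Iic.2 (by lia)) (Set.mem_Iic.2 (by lia)) hst
    lia
  chain u hu := h.chain (u + 1) (by lia)
  apex u hu := h.apex (u + 1) (by lia)
  not_apex := h.not_apex
  ne_apex u hu := h.ne_apex (u + 1) (by lia)

/-- The path `w (k + 1), …, w 1, w 0, j` is discriminating for `w 0`: its end nodes are not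
adjacent, and each of `w 1, …, w k` is a collider on it and has an arrow to `j`. -/
structure IsDiscriminating (G : MixedGraph V) (j : V) (k : ℕ) (w : ℕ → V) : Prop
    extends IsFan G.adj j k w where
  collider : ∀ u < k, G.collider (w u) (w (u + 1)) (w (u + 2))
  arrow : ∀ u < k, G.arrow (w (u + 1)) j

theorem isDiscriminating_zero {x y : V} (hG : G.IsDirectedAncestral) (hyx : G.adj y x)
    (hyj : G.adj y j) (hxj : ¬ G.adj x j) (hne : x ≠ j) :
    G.IsDiscriminating j 0 (cons y fun _ => x) := by
  have hpath : G.IsConnecting ∅ 1 (cons y fun _ => x) :=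
    isConnecting_zero.cons (fun _ _ => hG.ne_of_adj hyx) hyx fun h => absurd h (lt_irrefl 0)
  refine ⟨⟨hpath.injOn, fun u hu => hpath.adj u (by lia), fun u hu => ?_, hxj, fun u hu => ?_⟩,
    fun u hu => absurd hu u.not_lt_zero, fun u hu => absurd hu u.not_lt_zero⟩
  · obtain rfl : u = 0 := by lia
    exact hyj
  · obtain rfl | rfl : u = 0 ∨ u = 1 := by lia
    · exact hG.ne_of_adj hyj
    · exact hne

namespace IsDiscriminating

theorem tail (h : G.IsDiscriminating j (k + 1) w) :
    G.IsDiscriminating j k fun u => w (u + 1) where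
  toIsFan := h.toIsFan.tail
  collider u hu := h.collider (u + 1) (by lia)
  arrow u hu := h.arrow (u + 1) (by lia)

theorem mem_anSet (h : G.IsDiscriminating j k w) : ∀ u < k, w (u + 1) ∈ G.anSet (w (k + 1)) j :=
  fun u hu => ⟨Or.inr (anc_of_arrow (h.arrow u hu)), h.ne_last hu, h.ne_apex (u + 1) (by lia)⟩

theorem isConnecting (h : G.IsDiscriminating j k w) (hC : ∀ u < k, w (u + 1) ∈ C) :
    G.IsConnecting C (k + 1) w where
  injOn := h.injOn
  adj u hu := h.chain u (by lia)
  active s hs hsk := by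
    obtain ⟨u, rfl⟩ := Nat.exists_eq_add_of_le' hs
    exact active_of_collider (h.collider u (by lia)) (subset_an (hC u (by lia)))

theorem not_active_of_mSep (h : G.IsDiscriminating j k w) (hG : G.IsDirectedAncestral)
    (hsep : G.mSep {j} {w (k + 1)} C) (hC : ∀ u < k, w (u + 1) ∈ C) :
    ¬ G.Active C j (w 0) (w 1) := fun hactive =>
  mSep_iff.1 hsep ⟨_, _, (h.isConnecting hC).cons (fun u hu => (h.ne_apex u hu).symm)
    (hG.adj_symm (h.apex 0 (by lia))) fun _ => hactive, rfl, cons_succ⟩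

theorem mem_of_mSep (h : G.IsDiscriminating j k w) (hG : G.IsDirectedAncestral)
    (hsep : G.mSep {j} {w (k + 1)} C) : ∀ u < k, w (u + 1) ∈ C := by
  induction k generalizing w with
  | zero => exact fun u hu => absurd hu (Nat.not_lt_zero u)
  | succ k ih =>
    have htail := ih h.tail hsep
    rintro (_ | u) hu
    · by_contra hw
      exact h.tail.not_active_of_mSep hG hsep htail <|
        active_of_not_collider (fun hc => hG.not_headInto_of_arrow (h.arrow 0 hu) hc.1) hw
    · exact htail u (by lia)

theorem not_anc_of_collider (h : G.IsDiscriminating j k w) (hG : G.IsDirectedAncestral)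
    (hmax : G.Maximal) (hc : G.collider j (w 0) (w 1)) : ¬ G.anc (w 0) (w (k + 1)) := by
  -- A set separating `j` from `w (k + 1)` is missed by the descendants of `w 0`, so it does not
  -- block `j`, `w 0` followed by a directed path from `w 0` to `w (k + 1)`.
  intro hanc
  obtain ⟨C, -, -, hsep⟩ := hmax j (w (k + 1)) (h.ne_apex _ le_rfl).symm
    fun hadj => h.not_apex (hG.adj_symm hadj)
  have hw : w 0 ∉ G.an C := fun hw =>
    h.not_active_of_mSep hG hsep (h.mem_of_mSep hG hsep) (active_of_collider hc hw)
  obtain ⟨n, v, hv, hv0, hvn, hvanc, hv1⟩ := exists_isConnecting_of_anc hG hanc hw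
  have hjv : ∀ u ≤ n + 1, j ≠ v u := by
    rintro (_ | u) hu rfl
    · exact h.ne_apex 0 (by lia) hv0.symm
    · exact hG.not_headInto_of_anc (hvanc u (by lia)) hc.1
  refine mSep_iff.1 hsep ⟨_, _, hv.cons hjv ?_ fun _ => ?_, rfl, cons_succ.trans hvn⟩
  · rw [hv0]
    exact adj_of_headInto hc.1
  · rw [hv0]
    exact active_of_not_collider (fun hc' => hG.not_headInto_of_arrow hv1 hc'.2)
      fun hw' => hw (subset_an hw')

theorem collider_iff (h : G.IsDiscriminating j k w) (hG : G.IsDirectedAncestral)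
    (hmax : G.Maximal) : G.collider j (w 0) (w 1) ↔ w 0 ∉ G.anSet (w (k + 1)) j := by
  constructor
  · rintro hc ⟨hanc | hanc, -, -⟩
    · exact h.not_anc_of_collider hG hmax hc hanc
    · exact hG.not_headInto_of_anc hanc hc.1
  · intro hw
    have hnot : ¬ (G.anc (w 0) (w (k + 1)) ∨ G.anc (w 0) j) := fun hanc =>
      hw ⟨hanc, h.ne_last (by lia), h.ne_apex 0 (by lia)⟩
    have hj : ¬ G.arrow (w 0) j := fun ha => hnot (Or.inr (anc_of_arrow ha))
    have hw1 : ¬ G.arrow (w 0) (w 1) := by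
      intro ha
      rcases k with _ | k
      · exact hnot (Or.inl (anc_of_arrow ha))
      · exact hnot (Or.inr ((anc_of_arrow ha).tail (h.arrow 0 (by lia))))
    exact ⟨(headInto_or_arrow_of_adj (hG.adj_symm (h.apex 0 (by lia)))).resolve_right hj,
      (headInto_or_arrow_of_adj (hG.adj_symm (h.chain 0 (by lia)))).resolve_right hw1⟩

end IsDiscriminating

end MixedGraph

/-! ### Path-stability -/

section Stability

variable {V : Type} {ci : V → V → Set V → Prop} {G H K L : MixedGraph V} {i j : V} {C S : Set V}
  {k : ℕ} {w : ℕ → V}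

namespace MixedGraph

/-- The number of descendants of a node, which strictly decreases along directed paths. -/
noncomputable def rank (G : MixedGraph V) (a : V) : ℕ := {b | G.anc a b}.ncard

theorem IsDirectedAncestral.rank_lt_rank [Finite V] (hG : G.IsDirectedAncestral) {a b : V}
    (h : G.anc a b) : G.rank b < G.rank a :=
  Set.ncard_lt_ncard ⟨fun _ hx => anc_trans h hx, fun hsub => hG.not_anc_self (hsub h)⟩
    (Set.toFinite _)

end MixedGraph

theorem exists_ci_of_not_skP (hij : i ≠ j) (h : ¬ skP ci i j) :
    ∃ C : Set V, i ∉ C ∧ j ∉ C ∧ ci i j C :=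
  of_not_not fun h' => h ⟨hij, h'⟩

theorem UpStab.ci_union [Finite V] (hup : UpStab K.minLt ci) (hij : i ≠ j) (hi : i ∉ C) (hj : j ∉ C)
    (h : ci i j C) (hS : S ⊆ K.anSet i j) : ci i j (C ∪ S) := by
  induction S, S.toFinite using Set.Finite.induction_on with
  | empty => rwa [Set.union_empty]
  | @insert a S _ _ ih =>
    obtain ⟨haS, hS⟩ := Set.insert_subset_iff.1 hS
    rw [Set.insert_eq, Set.union_comm {a}, ← Set.union_assoc]
    exact hup i j (C ∪ S) hij (fun h => h.elim hi fun h => (hS h).2.1 rfl)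
      (fun h => h.elim hj fun h => (hS h).2.2 rfl) (ih hS) a haS.2.1 haS.2.2 haS.1

theorem DownStab.ci_anSet [Finite V] (hdown : DownStab K.minLt ci) (hK : K.IsDirectedAncestral)
    (hij : i ≠ j) (hi : i ∉ C) (hj : j ∉ C) (hC : K.anSet i j ⊆ C) (h : ci i j C) :
    ci i j (K.anSet i j) := by
  -- Removing the nodes outside `K.anSet i j` in order of increasing rank, descendants go first, as
  -- downward-stability requires.
  induction C using WellFoundedLT.induction with
  | ind D ih =>
    rcases hC.eq_or_ssubset with rfl | hD
    · exact h
    obtain ⟨a, ⟨haD, ha⟩, hmin⟩ := Set.exists_min_image (D \ K.anSet i j) K.rank (Set.toFinite _)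
      (Set.nonempty_of_ssubset hD)
    have hanc : ¬ (K.anc a i ∨ K.anc a j) := fun h' =>
      ha ⟨h', ne_of_mem_of_not_mem haD hi, ne_of_mem_of_not_mem haD hj⟩
    have hmaximal : ∀ l ∈ D \ {a}, ¬ K.anc a l := by
      rintro l ⟨hlD, -⟩ hal
      by_cases hl : l ∈ K.anSet i j
      · exact hanc (hl.1.imp (MixedGraph.anc_trans hal) (MixedGraph.anc_trans hal))
      · exact (hmin l ⟨hlD, hl⟩).not_gt (hK.rank_lt_rank hal)
    exact ih (D \ {a}) (Set.sdiff_singleton_ssubset.2 haD) (fun h' => hi h'.1) (fun h' => hj h'.1)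
      (Set.subset_sdiff_singleton hC ha)
      (hdown i j D hij hi hj h a (fun h' => hanc (Or.inl h')) (fun h' => hanc (Or.inr h')) hmaximal)

theorem ci_anSet [Finite V] (hup : UpStab K.minLt ci) (hdown : DownStab K.minLt ci)
    (hK : K.IsDirectedAncestral) (hij : i ≠ j) (h : ¬ skP ci i j) : ci i j (K.anSet i j) := by
  obtain ⟨C, hi, hj, h⟩ := exists_ci_of_not_skP hij h
  exact hdown.ci_anSet hK hij (fun h => h.elim hi fun h => h.2.1 rfl)
    (fun h => h.elim hj fun h => h.2.2 rfl) Set.subset_union_right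
    (hup.ci_union hij hi hj h subset_rfl)

theorem pathUnstable_of_isFan (hsymm : ∀ a b, skP ci a b → skP ci b a)
    (h : MixedGraph.IsFan (skP ci) j k w) (hi : w (k + 1) ∉ C) (hj : j ∉ C) (hw : w 0 ∉ C)
    (hC : ∀ u < k, w (u + 1) ∈ C) (hci : ci (w (k + 1)) j C)
    (hci' : ci (w (k + 1)) j (C ∪ {w 0})) : PathUnstable ci := by
  set is : List V := ((List.range k).map fun u => w (u + 1)).reverse
  have hmem : ∀ x ∈ is, ∃ u < k, w (u + 1) = x := by
    intro x hx
    simpa only [is, List.mem_reverse, List.mem_map, List.mem_range] using hx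
  have hpath : w (k + 1) :: (is ++ [w 0, j]) = (j :: (List.range (k + 2)).map w).reverse := by
    rw [List.range_succ, List.range_succ_eq_map]
    simp [is, Function.comp_def]
  have hunion : {x | x ∈ is} ∪ C = C := Set.union_eq_right.2 fun x hx => by
    obtain ⟨u, hu, rfl⟩ := hmem x hx
    exact hC u hu
  refine ⟨w (k + 1), w 0, j, is, C, ?_, ?_, h.not_apex, ?_, hi, hj, hw, ?_, ?_⟩
  · rw [hpath, List.nodup_reverse, List.nodup_cons]
    refine ⟨fun hj' => ?_, List.Nodup.map_on (fun s hs t ht => ?_) List.nodup_range⟩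
    · obtain ⟨u, hu, huj⟩ := List.mem_map.1 hj'
      exact h.ne_apex u (by rw [List.mem_range] at hu; lia) huj
    · rw [List.mem_range] at hs ht
      exact fun hst => h.injOn (Set.mem_Iic.2 (by lia)) (Set.mem_Iic.2 (by lia)) hst
  · rw [hpath]
    refine List.isChain_reverse.2 (List.isChain_cons.2 ⟨fun x hx => ?_, ?_⟩)
    · obtain rfl : w 0 = x := by simpa [List.range_succ_eq_map] using hx
      exact h.apex 0 (by lia)
    · refine List.isChain_iff_getElem.2 fun u hu => ?_
      rw [List.length_map, List.length_range] at hu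
      simpa only [List.getElem_map, List.getElem_range] using hsymm _ _ (h.chain u (by lia))
  · intro x hx
    obtain ⟨u, hu, rfl⟩ := hmem x hx
    exact h.apex (u + 1) (by lia)
  · rwa [hunion]
  · rwa [hunion]

/-- A maximal directed ancestral graph with the skeleton of `ci`, w.r.t. whose minimal order `ci`
satisfies ordered upward- and downward-stability: one of the graphs that the uniqueness property
compares. -/
structure StableMAG (ci : V → V → Set V → Prop) (G : MixedGraph V) : Prop where
  isDirectedAncestral : G.IsDirectedAncestral
  maximal : G.Maximal
  adj_iff : ∀ i j, G.adj i j ↔ skP ci i j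
  upStab : UpStab G.minLt ci
  downStab : DownStab G.minLt ci

namespace StableMAG

open MixedGraph

theorem adj_eq_skP (hG : StableMAG ci G) : G.adj = skP ci :=
  funext fun i => funext fun j => propext (hG.adj_iff i j)

theorem adj_eq (hG : StableMAG ci G) (hH : StableMAG ci H) : G.adj = H.adj :=
  hG.adj_eq_skP.trans hH.adj_eq_skP.symm

variable [Finite V] (hps : PathStable ci)
include hps

theorem mem_anSet_of_isFan (hK : StableMAG ci K) (hL : StableMAG ci L) (h : IsFan K.adj j k w)
    (hinner : ∀ u < k, w (u + 1) ∈ K.anSet (w (k + 1)) j) (hw : w 0 ∈ L.anSet (w (k + 1)) j) :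
    w 0 ∈ K.anSet (w (k + 1)) j := by
  by_contra hwK
  rw [hK.adj_eq_skP] at h
  have hsymm : ∀ a b, skP ci a b → skP ci b a := fun a b => by
    rw [← hK.adj_iff, ← hK.adj_iff]
    exact hK.isDirectedAncestral.adj_symm
  have hij := h.ne_apex (k + 1) le_rfl
  have hi : w (k + 1) ∉ K.anSet (w (k + 1)) j := fun h' => h'.2.1 rfl
  have hj : j ∉ K.anSet (w (k + 1)) j := fun h' => h'.2.2 rfl
  have hci := ci_anSet hK.upStab hK.downStab hK.isDirectedAncestral hij h.not_apex
  exact hps <| pathUnstable_of_isFan hsymm h hi hj hwK hinner hci <|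
    hL.upStab _ _ _ hij hi hj hci _ hw.2.1 hw.2.2 hw.1

theorem arrow_transfer (hG : StableMAG ci G) (hH : StableMAG ci H) (h : H.IsDiscriminating j k w)
    (hw : H.headInto (w 1) (w 0)) (harrow : G.arrow (w 0) j) : H.arrow (w 0) j := by
  have hanc : w 0 ∈ H.anSet (w (k + 1)) j := mem_anSet_of_isFan hps hH hG h.toIsFan h.mem_anSet
    ⟨Or.inr (anc_of_arrow harrow), h.ne_last (by lia), h.ne_apex 0 (by lia)⟩
  refine (headInto_or_arrow_of_adj (hH.isDirectedAncestral.adj_symm (h.apex 0 (by lia)))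
    ).resolve_left fun hj => ?_
  exact (h.collider_iff hH.isDirectedAncestral hH.maximal).1 ⟨hj, hw⟩ hanc

theorem arrow_of_isFan (hG : StableMAG ci G) (hH : StableMAG ci H) (h : IsFan G.adj j k w)
    (hleft : ∀ u < k, H.headInto (w u) (w (u + 1)))
    (hright : ∀ u ≤ k, H.headInto (w (u + 1)) (w u)) (harrow : ∀ u ≤ k, G.arrow (w u) j) :
    ∀ u ≤ k, H.arrow (w u) j := by
  have hfan : IsFan H.adj j k w := hG.adj_eq hH ▸ h
  induction k generalizing w with
  | zero =>
    intro u hu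
    obtain rfl : u = 0 := by lia
    exact arrow_transfer hps hG hH
      ⟨hfan, fun u hu => absurd hu u.not_lt_zero, fun u hu => absurd hu u.not_lt_zero⟩
      (hright 0 le_rfl) (harrow 0 le_rfl)
  | succ k ih =>
    have htail := ih h.tail (fun u hu => hleft (u + 1) (by lia))
      (fun u hu => hright (u + 1) (by lia)) (fun u hu => harrow (u + 1) (by lia)) hfan.tail
    rintro (_ | u) hu
    · exact arrow_transfer hps hG hH ⟨hfan, fun u hu => ⟨hleft u hu, hright (u + 1) (by lia)⟩,
        fun u hu => htail u (by lia)⟩ (hright 0 (by lia)) (harrow 0 (by lia))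
    · exact htail u (by lia)

theorem isDiscriminating_transfer (hG : StableMAG ci G) (hH : StableMAG ci H)
    (h : G.IsDiscriminating j k w) (hc : ∀ u < k, H.collider (w u) (w (u + 1)) (w (u + 2))) :
    H.IsDiscriminating j k w where
  toIsFan := hG.adj_eq hH ▸ h.toIsFan
  collider := hc
  arrow := by
    rcases k with _ | k
    · exact fun u hu => absurd hu u.not_lt_zero
    · exact fun u hu => arrow_of_isFan hps hG hH h.tail.toIsFan
        (fun u hu => (hc (u + 1) (by lia)).1) (fun u hu => (hc u (by lia)).2)
        (fun u hu => h.arrow u (by lia)) u (by lia)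

theorem collider_iff_of_isDiscriminating (hG : StableMAG ci G) (hH : StableMAG ci H)
    (h : G.IsDiscriminating j k w) (hc : ∀ u < k, H.collider (w u) (w (u + 1)) (w (u + 2))) :
    G.collider j (w 0) (w 1) ↔ H.collider j (w 0) (w 1) := by
  have h' := isDiscriminating_transfer hps hG hH h hc
  rw [h.collider_iff hG.isDirectedAncestral hG.maximal,
    h'.collider_iff hH.isDirectedAncestral hH.maximal]
  exact not_congr ⟨mem_anSet_of_isFan hps hH hG h'.toIsFan h'.mem_anSet,
    mem_anSet_of_isFan hps hG hH h.toIsFan h.mem_anSet⟩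

end StableMAG

end Stability

/-! ### Connecting paths of least weight -/

namespace MixedGraph

variable {V : Type} {G : MixedGraph V} {C : Set V} {x : V} {l m n r s t : ℕ} {v w : ℕ → V}

/-- The weight of the path `v 0, …, v n`. It is lowered both by deleting nodes and by replacing them
by a descendant of one of them. -/
noncomputable def weight (G : MixedGraph V) (n : ℕ) (v : ℕ → V) : ℕ :=
  ∑ u ∈ Finset.range (n + 1), (G.rank (v u) + 1)

theorem weight_reverse : G.weight n (fun u => v (n - u)) = G.weight n v :=
  Finset.sum_flip fun u => G.rank (v u) + 1

theorem weight_join : G.weight (l + 1 + m) (join l v w) = G.weight l v + G.weight m w := by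
  rw [weight, add_assoc (l + 1), Finset.sum_range_add]
  congr 1
  · exact Finset.sum_congr rfl fun u hu => by rw [join_left (Finset.mem_range_succ_iff.1 hu)]
  · simp only [join_right, weight]

theorem weight_cons : G.weight (n + 1) (cons x v) = G.rank x + 1 + G.weight n v := by
  rw [cons, show n + 1 = 0 + 1 + n by lia, weight_join]
  simp [weight]

theorem weight_eq_add (hl : l < n) :
    G.weight n v = G.weight l v + G.weight (n - (l + 1)) fun u => v (l + 1 + u) := by
  rw [weight, weight, weight, ← Finset.sum_range_add]
  congr 2
  lia

theorem rank_add_weight_drop_le (ht : t < r) (hr : r ≤ n) :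
    G.rank (v t) + 1 + G.weight (n - r) (fun u => v (r + u)) ≤ G.weight n v := by
  obtain ⟨l, rfl⟩ := Nat.exists_eq_add_of_le' (Nat.zero_lt_of_lt ht)
  rw [weight_eq_add (Nat.lt_of_succ_le hr)]
  exact Nat.add_le_add_right (Finset.single_le_sum (f := fun u => G.rank (v u) + 1)
    (fun _ _ => Nat.zero_le _) (Finset.mem_range.2 ht)) _

/-- A connecting path given `C` of least weight among those with the same end nodes. -/
structure IsMinimal (G : MixedGraph V) (C : Set V) (n : ℕ) (v : ℕ → V) : Prop
    extends IsConnecting G C n v where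
  weight_le : ∀ m w, G.IsConnecting C m w → w 0 = v 0 → w m = v n → G.weight n v ≤ G.weight m w

theorem IsConnecting.exists_isMinimal (h : G.IsConnecting C n v) :
    ∃ m w, G.IsMinimal C m w ∧ w 0 = v 0 ∧ w m = v n := by
  obtain ⟨⟨m, w⟩, ⟨hw, hw0, hwm⟩, hmin⟩ := exists_minimalFor_of_wellFoundedLT
    (fun p : ℕ × (ℕ → V) => G.IsConnecting C p.1 p.2 ∧ p.2 0 = v 0 ∧ p.2 p.1 = v n)
    (fun p => G.weight p.1 p.2) ⟨(n, v), h, rfl, rfl⟩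
  exact ⟨m, w, ⟨hw, fun m' w' hw' h0 hm => (le_total _ _).elim id <|
    @hmin (m', w') ⟨hw', h0.trans hw0, hm.trans hwm⟩⟩, hw0, hwm⟩

namespace IsMinimal

theorem reverse (h : G.IsMinimal C n v) (hG : G.IsDirectedAncestral) :
    G.IsMinimal C n fun u => v (n - u) where
  toIsConnecting := h.toIsConnecting.reverse hG
  weight_le m w hw h0 hm := by
    rw [weight_reverse, ← weight_reverse (v := w)]
    exact h.weight_le m _ (hw.reverse hG) (by simpa using hm) (by simpa using h0)

theorem rank_add_weight_drop_le (h : G.IsMinimal C n v) (hlt : l < t) (htr : t < r) (hr : r ≤ n)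
    (hw : G.IsConnecting C (l + 1 + m) (join l v w)) (hwm : w m = v n) :
    G.rank (v t) + 1 + G.weight (n - r) (fun u => v (r + u)) ≤ G.weight m w := by
  have hle := h.weight_le _ _ hw (join_left l.zero_le) (join_right.trans hwm)
  rw [weight_join, weight_eq_add (show l < n by lia), Nat.add_le_add_iff_left] at hle
  refine le_trans ?_ hle
  have := MixedGraph.rank_add_weight_drop_le (G := G) (n := n - (l + 1))
    (v := fun u => v (l + 1 + u)) (show t - (l + 1) < r - (l + 1) by lia) (by lia)
  simpa only [show l + 1 + (t - (l + 1)) = t by lia, show l + 1 + (r - (l + 1)) = r by lia,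
    show n - (l + 1) - (r - (l + 1)) = n - r by lia, ← add_assoc] using this

theorem no_shortcut (h : G.IsMinimal C n v) (hlr : l + 1 < r) (hr : r ≤ n)
    (hadj : G.adj (v l) (v r)) (hl : 0 < l → G.Active C (v (l - 1)) (v l) (v r))
    (hr' : r < n → G.Active C (v l) (v r) (v (r + 1))) : False := by
  have hjoin := (h.take (by lia)).append (h.drop hr)
    (fun s hs t ht hst => by have := h.eq_of_eq (by lia) (by lia) hst; lia)
    hadj hl fun hn => hr' (by lia)
  have := h.rank_add_weight_drop_le l.lt_succ_self hlr hr hjoin (by rw [Nat.add_sub_cancel' hr])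
  lia

theorem no_detour [Finite V] (h : G.IsMinimal C n v) (hG : G.IsDirectedAncestral) (hlt : l < t)
    (htr : t < r) (hr : r ≤ n) (hanc : G.anc (v t) x) (hx : ∀ u ≤ n, v u ≠ x)
    (hlx : G.adj (v l) x) (hxr : G.adj x (v r))
    (hl : 0 < l → G.Active C (v (l - 1)) (v l) x) (hm : G.Active C (v l) x (v r))
    (hr' : r < n → G.Active C x (v r) (v (r + 1))) : False := by
  have hcons := (h.drop hr).cons (fun u _ => (hx (r + u) (by lia)).symm) hxr fun hn => hr' (by lia)
  have hdisj : ∀ s ≤ l, ∀ u ≤ n - r + 1, v s ≠ cons x (fun u => v (r + u)) u := by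
    rintro s hs (_ | u) hu hsu
    · exact hx s (by lia) hsu
    · rw [cons_succ] at hsu
      have := h.eq_of_eq (by lia) (by lia) hsu
      lia
  have hjoin := (h.take (show l ≤ n by lia)).append hcons hdisj hlx hl fun _ => hm
  have hlast : cons x (fun u => v (r + u)) (n - r + 1) = v n := by
    rw [cons_succ, Nat.add_sub_cancel' hr]
  have hle := h.rank_add_weight_drop_le hlt htr hr hjoin hlast
  rw [weight_cons] at hle
  have := hG.rank_lt_rank hanc
  lia

end IsMinimal

end MixedGraph

/-! ### Discriminating paths inside minimal paths -/

namespace MixedGraph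

variable {V : Type} {G : MixedGraph V} {C : Set V} {x : V} {k l n r s t : ℕ} {v : ℕ → V}

theorem IsConnecting.collider_of_mem (h : G.IsConnecting C n v) (hs : 0 < s) (hsn : s < n)
    (hC : v s ∈ C) : G.collider (v (s - 1)) (v s) (v (s + 1)) :=
  (h.active s hs hsn).collider_of_mem hC

theorem IsConnecting.exists_scan (h : G.IsConnecting C n v) (hG : G.IsDirectedAncestral)
    (ht : t < n) (harrow : G.arrow (v t) x) (hhead : G.headInto (v (t + 1)) (v t)) :
    ∃ r, t < r ∧ r ≤ n ∧ v r ≠ x ∧ (∀ u, t < u → u < r → v u ∈ C ∧ G.arrow (v u) x) ∧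
      (G.adj (v r) x → G.headInto (v r) x ∧ (r < n → G.Active C x (v r) (v (r + 1)))) := by
  classical
  have hex : ∃ r, t < r ∧ ¬ (r < n ∧ v r ∈ C ∧ G.arrow (v r) x) := ⟨n, ht, fun h => h.1.false⟩
  obtain ⟨r, ⟨htr, hr⟩, hmin⟩ : ∃ r, (t < r ∧ ¬ (r < n ∧ v r ∈ C ∧ G.arrow (v r) x)) ∧
      ∀ u, t < u → u < r → u < n ∧ v u ∈ C ∧ G.arrow (v u) x :=
    ⟨Nat.find hex, Nat.find_spec hex, fun u htu hu =>
      of_not_not fun h' => Nat.find_min hex hu ⟨htu, h'⟩⟩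
  have hrn : r ≤ n := by
    by_contra hrn
    exact (hmin n ht (by lia)).1.false
  obtain ⟨q, rfl⟩ := Nat.exists_eq_add_of_lt htr
  have hq : G.arrow (v (t + q)) x ∧ G.headInto (v (t + q + 1)) (v (t + q)) := by
    rcases Nat.eq_zero_or_pos q with rfl | hq
    · exact ⟨harrow, hhead⟩
    · obtain ⟨hqn, hqC, hqx⟩ := hmin (t + q) (by lia) (by lia)
      exact ⟨hqx, (h.collider_of_mem (by lia) hqn hqC).2⟩
  refine ⟨t + q + 1, htr, hrn, ?_, fun u htu hu => (hmin u htu hu).2, fun hadj => ?_⟩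
  · rintro rfl
    exact hG.not_headInto_of_arrow hq.1 hq.2
  · refine ⟨hG.headInto_of_arrow_of_adj hq.2 hq.1 hadj, fun hlt => ?_⟩
    by_contra hactive
    obtain ⟨hC, harr, -⟩ := hG.mem_and_arrow_and_collider_of_not_active
      (h.active (t + q + 1) (by lia) hlt) hactive (h.adj (t + q) (by lia)) (hG.adj_symm hadj)
      (hG.adj_symm (adj_of_arrow hq.1)) fun hx => absurd hx (hG.not_headInto_of_arrow hq.1)
    exact hr ⟨hlt, hC, harr⟩

theorem IsConnecting.isFan (h : G.IsConnecting C n v) (hG : G.IsDirectedAncestral)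
    (hn : s + k + 1 ≤ n) (hs : G.adj (v s) x) (harrow : ∀ u < k, G.arrow (v (s + (u + 1))) x)
    (hnot : ¬ G.adj (v (s + k + 1)) x) (hne : v (s + k + 1) ≠ x) :
    IsFan G.adj x k fun u => v (s + u) := by
  have hapex : ∀ u ≤ k, G.adj (v (s + u)) x := by
    rintro (_ | u) hu
    · exact hs
    · exact adj_of_arrow (harrow u hu)
  refine ⟨fun a ha b hb hab => ?_, fun u hu => h.adj (s + u) (by lia), hapex, hnot, fun u hu => ?_⟩
  · simp only [Set.mem_Iic] at ha hb
    have := h.eq_of_eq (by lia) (by lia) hab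
    lia
  · rcases hu.lt_or_eq with hu | rfl
    · exact hG.ne_of_adj (hapex u (by lia))
    · exact hne

/-- The nodes `v r, …, v s, v (s - 1)` of a connecting path given `C` form a discriminating path for
`v s`, an unshielded triple when `r = s + 1`. The nodes between `v s` and `v r` are colliders
because they lie in `C`. -/
structure DiscriminatesRight (G : MixedGraph V) (C : Set V) (n : ℕ) (v : ℕ → V) (s r : ℕ) :
    Prop where
  lt : s < r
  le : r ≤ n
  inner : ∀ u, s < u → u < r → v u ∈ C ∧ G.arrow (v u) (v (s - 1))
  not_adj : ¬ G.adj (v r) (v (s - 1))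

/-- The mirror image of `DiscriminatesRight`: the nodes `v l, …, v s, v (s + 1)` of a connecting
path form a discriminating path for `v s`. -/
structure DiscriminatesLeft (G : MixedGraph V) (C : Set V) (v : ℕ → V) (s l : ℕ) : Prop where
  lt : l < s
  inner : ∀ u, l < u → u < s → v u ∈ C ∧ G.arrow (v u) (v (s + 1))
  not_adj : ¬ G.adj (v l) (v (s + 1))

theorem discriminatesRight_reverse_iff (hs : s < n) (hl : l ≤ n) :
    G.DiscriminatesRight C n (fun u => v (n - u)) (n - s) (n - l) ↔
      G.DiscriminatesLeft C v s l := by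
  have hs1 : n - (n - s - 1) = s + 1 := by lia
  constructor
  · rintro ⟨hlt, -, hinner, hnot⟩
    refine ⟨by lia, fun u hlu hus => ?_, ?_⟩
    · simpa only [hs1, show n - (n - u) = u by lia] using hinner (n - u) (by lia) (by lia)
    · simpa only [hs1, Nat.sub_sub_self hl] using hnot
  · rintro ⟨hlt, hinner, hnot⟩
    refine ⟨by lia, n.sub_le l, fun u hsu hul => ?_, ?_⟩
    · simpa only [hs1] using hinner (n - u) (by lia) (by lia)
    · simpa only [hs1, Nat.sub_sub_self hl] using hnot

theorem DiscriminatesRight.isDiscriminating (h : G.DiscriminatesRight C n v s (s + k + 1))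
    (hG : G.IsDirectedAncestral) (hv : G.IsConnecting C n v) (hs : 0 < s) :
    G.IsDiscriminating (v (s - 1)) k fun u => v (s + u) where
  toIsFan := by
    have hadj := hv.adj (s - 1) (by have := h.le; lia)
    rw [Nat.sub_add_cancel hs] at hadj
    refine hv.isFan hG h.le (hG.adj_symm hadj)
      (fun u hu => (h.inner (s + (u + 1)) (by lia) (by lia)).2) h.not_adj fun heq => ?_
    have hle := h.le
    have := hv.eq_of_eq hle (by lia) heq
    lia
  collider u hu := hv.collider_of_mem (s.add_pos_left hs (u + 1)) (by have := h.le; lia)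
    (h.inner (s + (u + 1)) (by lia) (by lia)).1
  arrow u hu := (h.inner (s + (u + 1)) (by lia) (by lia)).2

theorem IsMinimal.exists_discriminatesRight (h : G.IsMinimal C n v) (hG : G.IsDirectedAncestral)
    (hs : 0 < s) (hadj : G.adj (v (s - 1)) (v (s + 1))) (hsn : s + 1 < n)
    (hright : ¬ G.Active C (v (s - 1)) (v (s + 1)) (v (s + 2))) :
    ∃ r, G.DiscriminatesRight C n v s r := by
  have hprev : G.adj (v (s - 1)) (v s) := by
    simpa only [Nat.sub_add_cancel hs] using h.adj (s - 1) (by lia)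
  obtain ⟨hC, harrow, hc⟩ := hG.mem_and_arrow_and_collider_of_not_active
    (h.active (s + 1) s.succ_pos hsn) hright (h.adj s (by lia)) hadj hprev
    fun _ => h.active s hs (by lia)
  obtain ⟨r, hsr, hrn, -, hinner, hr⟩ := h.exists_scan hG hsn harrow hc.2
  have hback : G.headInto (v s) (v (s - 1)) :=
    hG.headInto_of_arrow_of_adj hc.1 harrow (hG.adj_symm hprev)
  refine ⟨r, by lia, hrn, fun u hsu hur => ?_, fun hadj' => ?_⟩
  · rcases Nat.eq_or_lt_of_le hsu with rfl | hsu
    · exact ⟨hC, harrow⟩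
    · exact hinner u hsu hur
  · obtain ⟨hhead, hactive⟩ := hr hadj'
    refine h.no_shortcut (by lia) hrn (hG.adj_symm hadj') (fun hs' => ?_) hactive
    have := (h.active (s - 1) hs' (by lia)).symm
    rw [Nat.sub_add_cancel hs] at this
    exact ((active_congr_left (by simp only [hback, hhead])).1 this).symm

theorem IsMinimal.exists_discriminates (h : G.IsMinimal C n v) (hG : G.IsDirectedAncestral)
    (hs : 0 < s) (hsn : s < n) :
    (∃ r, G.DiscriminatesRight C n v s r) ∨ ∃ l, G.DiscriminatesLeft C v s l := by
  by_cases hadj : G.adj (v (s - 1)) (v (s + 1))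
  swap
  · exact Or.inl ⟨s + 1, s.lt_succ_self, hsn, fun u _ _ => by lia,
      fun h' => hadj (hG.adj_symm h')⟩
  by_cases hright : s + 1 < n ∧ ¬ G.Active C (v (s - 1)) (v (s + 1)) (v (s + 2))
  · exact Or.inl (h.exists_discriminatesRight hG hs hadj hright.1 hright.2)
  by_cases hleft : 0 < s - 1 ∧ ¬ G.Active C (v (s - 1 - 1)) (v (s - 1)) (v (s + 1))
  · have hsub : n - (n - s - 1) = s + 1 ∧ n - (n - s + 1) = s - 1 ∧
        n - (n - s + 2) = s - 1 - 1 := by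
      lia
    obtain ⟨r, hr⟩ := (h.reverse hG).exists_discriminatesRight hG (s := n - s) (by lia)
      (by simpa only [hsub] using hG.adj_symm hadj) (by lia)
      (by simpa only [hsub] using fun h' => hleft.2 (Active.symm h'))
    refine Or.inr ⟨n - r, (discriminatesRight_reverse_iff hsn (n.sub_le r)).1 ?_⟩
    rwa [Nat.sub_sub_self hr.le]
  · exact (h.no_shortcut (by lia) hsn hadj (fun hs' => of_not_not fun h' => hleft ⟨hs', h'⟩)
      fun hn => of_not_not fun h' => hright ⟨hn, h'⟩).elim

end MixedGraph

/-! ### Colliders on minimal paths -/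

theorem exists_facing {B : Set ℕ} {R L : ℕ → ℕ → Prop} (hfin : B.Finite) (hne : B.Nonempty)
    (h : ∀ s ∈ B, (∃ r, R s r ∧ ∃ t ∈ B, s < t ∧ t < r) ∨ ∃ l, L s l ∧ ∃ t ∈ B, l < t ∧ t < s) :
    ∃ s r t l, R s r ∧ L t l ∧ l < s ∧ s < t ∧ t < r := by
  -- Take for `s` the last element of the first kind and for `t` its successor in `B`.
  have hright : {s ∈ B | ∃ r, R s r ∧ ∃ t ∈ B, s < t ∧ t < r}.Nonempty := by
    obtain ⟨s, hs, hmin⟩ := Set.exists_min_image B id hfin hne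
    refine ⟨s, hs, (h s hs).resolve_right ?_⟩
    rintro ⟨-, -, t, ht, -, hts⟩
    exact (hmin t ht).not_gt hts
  obtain ⟨s, ⟨-, r, hr, q, hq, hsq, hqr⟩, hmax⟩ :=
    Set.exists_max_image _ id (hfin.subset fun _ hs => hs.1) hright
  obtain ⟨t, ⟨ht, hst⟩, hmin⟩ :=
    Set.exists_min_image {t ∈ B | s < t} id (hfin.subset fun _ ht => ht.1) ⟨q, hq, hsq⟩
  obtain ⟨l, hl, p, hp, hlp, hpt⟩ := (h t ht).resolve_left fun ht' => (hmax t ⟨ht, ht'⟩).not_gt hst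
  have hps : p ≤ s := not_lt.1 fun hsp => (hmin p ⟨hp, hsp⟩).not_gt hpt
  exact ⟨s, r, t, l, hr, hl, hlp.trans_le hps, hst, (hmin q ⟨hq, hsq⟩).trans_lt hqr⟩

namespace MixedGraph

variable {V : Type} {ci : V → V → Set V → Prop} {G H : MixedGraph V} {C : Set V}
  {l n r s t : ℕ} {v : ℕ → V}

/-- `v s` is a collider on the path `v` in `G` if and only if it is one in `H`. -/
def SameStatus (G H : MixedGraph V) (v : ℕ → V) (s : ℕ) : Prop :=
  G.collider (v (s - 1)) (v s) (v (s + 1)) ↔ H.collider (v (s - 1)) (v s) (v (s + 1))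

theorem sameStatus_reverse_iff (hs : 0 < s) (hsn : s < n) :
    G.SameStatus H (fun u => v (n - u)) (n - s) ↔ G.SameStatus H v s := by
  have hsub : n - (n - s) = s ∧ n - (n - s - 1) = s + 1 ∧ n - (n - s + 1) = s - 1 := by lia
  simp only [SameStatus, hsub, G.collider_comm (a := v (s + 1)), H.collider_comm (a := v (s + 1))]

theorem IsConnecting.not_facing (hv : G.IsConnecting C n v) (hG : G.IsDirectedAncestral)
    (hmax : G.Maximal) (hr : G.DiscriminatesRight C n v s r) (hl : G.DiscriminatesLeft C v t l)
    (hls : l < s) (hst : s < t) (htr : t < r) : False := by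
  have hnot : ¬ G.adj (v (t + 1)) (v (s - 1)) := by
    intro hadj
    rcases Nat.eq_or_lt_of_le htr with rfl | htr
    · exact hr.not_adj hadj
    · rcases Nat.eq_or_lt_of_le (Nat.le_sub_one_of_lt hls) with rfl | hls
      · exact hl.not_adj (hG.adj_symm hadj)
      · exact hG.not_headInto_of_arrow (hr.inner (t + 1) (by lia) htr).2
          (Or.inl (hl.inner (s - 1) hls (by lia)).2)
  obtain ⟨hC, harrow⟩ := hl.inner s hls hst
  have hright : G.DiscriminatesRight C n v s (t + 1) :=
    ⟨by lia, htr.trans_le hr.le, fun u hsu hut => hr.inner u hsu (by lia), hnot⟩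
  obtain ⟨k, rfl⟩ := Nat.exists_eq_add_of_le hst.le
  exact (hright.isDiscriminating hG hv (Nat.zero_lt_of_lt hls)).not_anc_of_collider hG hmax
    (hv.collider_of_mem (Nat.zero_lt_of_lt hls) (by have := hr.le; lia) hC) (anc_of_arrow harrow)

variable [Finite V] (hps : PathStable ci) (hG : StableMAG ci G) (hH : StableMAG ci H)
include hps hG hH

theorem DiscriminatesRight.sameStatus (h : G.DiscriminatesRight C n v s r)
    (hv : G.IsConnecting C n v) (hs : 0 < s)
    (hinner : ∀ u, s < u → u < r → G.SameStatus H v u) : G.SameStatus H v s := by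
  obtain ⟨k, rfl⟩ := Nat.exists_eq_add_of_lt h.lt
  have hdisc := h.isDiscriminating hG.isDirectedAncestral hv hs
  exact StableMAG.collider_iff_of_isDiscriminating hps hG hH hdisc fun u hu =>
    (hinner (s + (u + 1)) (by lia) (by lia)).1 (hdisc.collider u hu)

theorem DiscriminatesLeft.sameStatus (h : G.DiscriminatesLeft C v s l)
    (hv : G.IsConnecting C n v) (hsn : s < n)
    (hinner : ∀ u, l < u → u < s → G.SameStatus H v u) : G.SameStatus H v s := by
  have hl := h.lt
  refine (sameStatus_reverse_iff (by lia) hsn).1 <|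
    ((discriminatesRight_reverse_iff hsn (by lia)).2 h).sameStatus hps hG hH
      (hv.reverse hG.isDirectedAncestral) (by lia) fun u hu hul => ?_
  have := hinner (n - u) (by lia) (by lia)
  rw [← sameStatus_reverse_iff (n := n) (by lia) (by lia)] at this
  rwa [Nat.sub_sub_self (by lia)] at this

theorem IsMinimal.sameStatus (h : G.IsMinimal C n v) (hs : 0 < s) (hsn : s < n) :
    G.SameStatus H v s := by
  by_contra hs'
  set bad : Set ℕ := {s | (0 < s ∧ s < n) ∧ ¬ G.SameStatus H v s}
  have hfin : bad.Finite := (Set.finite_lt_nat n).subset fun u hu => hu.1.2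
  obtain ⟨s, r, t, l, hr, hl, hls, hst, htr⟩ := exists_facing (R := G.DiscriminatesRight C n v)
    (L := G.DiscriminatesLeft C v) hfin ⟨s, ⟨hs, hsn⟩, hs'⟩ <| by
      rintro s ⟨⟨hs, hsn⟩, hs'⟩
      refine (h.exists_discriminates hG.isDirectedAncestral hs hsn).imp ?_ ?_
      · rintro ⟨r, hr⟩
        refine ⟨r, hr, of_not_not fun hno => hs' ?_⟩
        exact hr.sameStatus hps hG hH h.toIsConnecting hs fun u hsu hur => of_not_not fun hu =>
          hno ⟨u, ⟨⟨by lia, hur.trans_le hr.le⟩, hu⟩, hsu, hur⟩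
      · rintro ⟨l, hl⟩
        refine ⟨l, hl, of_not_not fun hno => hs' ?_⟩
        exact hl.sameStatus hps hG hH h.toIsConnecting hsn fun u hlu hus => of_not_not fun hu =>
          hno ⟨u, ⟨⟨by lia, by lia⟩, hu⟩, hlu, hus⟩
  exact h.not_facing hG.isDirectedAncestral hG.maximal hr hl hls hst htr

end MixedGraph

/-! ### Ancestors of the conditioning set -/

namespace MixedGraph

variable {V : Type} {ci : V → V → Set V → Prop} {G H : MixedGraph V} {C : Set V} {x y z : V}
  {l n r t : ℕ} {v : ℕ → V} [Finite V]

theorem IsMinimal.no_bypass (h : G.IsMinimal C n v) (hG : G.IsDirectedAncestral) (hlt : l < t)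
    (htr : t < r) (hr : r ≤ n) (hanc : G.anc (v t) x) (hxC : x ∈ G.an C)
    (hx : ∀ u, l ≤ u → u ≤ r → v u ≠ x) (hlx : G.headInto (v l) x) (hrx : G.headInto (v r) x)
    (hl : 0 < l → G.Active C (v (l - 1)) (v l) x)
    (hr' : r < n → G.Active C x (v r) (v (r + 1))) : False := by
  have hxr := hG.adj_symm (adj_of_headInto hrx)
  by_cases hoff : ∀ u ≤ n, v u ≠ x
  · exact h.no_detour hG hlt htr hr hanc hoff (adj_of_headInto hlx) hxr hl
      (active_of_collider ⟨hlx, hrx⟩ hxC) hr'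
  push Not at hoff
  obtain ⟨u, hun, rfl⟩ := hoff
  rcases lt_or_ge u l with hul | hlu
  · exact h.no_shortcut (by lia) hr hxr
      (fun hu => active_of_mem_an hxC fun hC => ⟨(h.collider_of_mem hu (by lia) hC).1, hrx⟩) hr'
  · have hru : r < u := lt_of_not_ge fun hur => hx u hlu hur rfl
    exact h.no_shortcut (by lia) hun (adj_of_headInto hlx) hl
      fun hu => active_of_mem_an hxC fun hC => ⟨hlx, (h.collider_of_mem (by lia) hu hC).2⟩

theorem exists_min_arrow (hx : x ∈ G.an C) (hxC : x ∉ C) :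
    ∃ y ∈ G.an C, G.arrow x y ∧ ∀ z ∈ G.an C, G.arrow x z → G.rank y ≤ G.rank z := by
  obtain ⟨y, ⟨hy, hxy⟩, hmin⟩ := Set.exists_min_image {y | y ∈ G.an C ∧ G.arrow x y} G.rank
    (Set.toFinite _) (exists_arrow_of_mem_an hx hxC)
  exact ⟨y, hy, hxy, fun z hz hxz => hmin z ⟨hz, hxz⟩⟩

variable (hps : PathStable ci) (hG : StableMAG ci G) (hH : StableMAG ci H)
include hps hG hH

theorem IsMinimal.arrow_or_exists_headInto (h : G.IsMinimal C n v) (ht : 0 < t) (htn : t < n)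
    (hcol : G.collider (v (t - 1)) (v t) (v (t + 1))) (harrow : G.arrow (v t) x) :
    H.arrow (v t) x ∨ ∃ r, t < r ∧ r ≤ n ∧ (∀ u, t ≤ u → u ≤ r → v u ≠ x) ∧
      G.headInto (v r) x ∧ (r < n → G.Active C x (v r) (v (r + 1))) := by
  obtain ⟨r, htr, hrn, hne, hinner, hr⟩ := h.exists_scan hG.isDirectedAncestral htn harrow hcol.2
  by_cases hadj : G.adj (v r) x
  · refine Or.inr ⟨r, htr, hrn, fun u htu hur => ?_, hr hadj⟩
    rcases hur.lt_or_eq with hur | rfl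
    · refine hG.isDirectedAncestral.ne_of_adj (adj_of_arrow ?_)
      rcases htu.lt_or_eq with htu | rfl
      · exact (hinner u htu hur).2
      · exact harrow
    · exact hne
  · obtain ⟨k, rfl⟩ := Nat.exists_eq_add_of_lt htr
    have hcolH : ∀ u ≤ k, H.collider (v (t + u - 1)) (v (t + u)) (v (t + u + 1)) := by
      refine fun u hu => (h.sameStatus hps hG hH (by lia) (by lia)).1 ?_
      rcases u.eq_zero_or_pos with rfl | hu0
      · exact hcol
      · exact h.collider_of_mem (by lia) (by lia) (hinner _ (by lia) (by lia)).1
    have hfan := h.isFan hG.isDirectedAncestral hrn (adj_of_arrow harrow)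
      (fun u hu => (hinner (t + (u + 1)) (by lia) (by lia)).2) hadj hne
    refine Or.inl <| StableMAG.arrow_of_isFan hps hG hH hfan
      (fun u hu => (hcolH (u + 1) (by lia)).1) (fun u hu => (hcolH u hu).2) ?_ 0 k.zero_le
    rintro (_ | u) hu
    · exact harrow
    · exact (hinner (t + (u + 1)) (by lia) (by lia)).2

theorem IsMinimal.arrow_of_collider (h : G.IsMinimal C n v) (ht : 0 < t) (htn : t < n)
    (hcol : G.collider (v (t - 1)) (v t) (v (t + 1))) (harrow : G.arrow (v t) x)
    (hx : x ∈ G.an C) : H.arrow (v t) x := by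
  have hanc := hG.isDirectedAncestral
  have hsub : n - (n - t) = t ∧ n - (n - t - 1) = t + 1 ∧ n - (n - t + 1) = t - 1 := by lia
  obtain hH' | ⟨r, htr, hrn, hne, hrx, hr⟩ :=
    h.arrow_or_exists_headInto hps hG hH ht htn hcol harrow
  · exact hH'
  obtain hH' | ⟨l, htl, hln, hne', hlx, hl⟩ :=
    (h.reverse hanc).arrow_or_exists_headInto hps hG hH (t := n - t) (x := x) (by lia) (by lia)
      (by simpa only [hsub] using collider_comm.1 hcol) (by simpa only [hsub] using harrow)
  · simpa only [hsub] using hH'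
  refine (h.no_bypass hanc (l := n - l) (by lia) htr hrn (anc_of_arrow harrow) hx
    (fun u hlu hur => ?_) hlx hrx (fun hl0 => ?_) hr).elim
  · rcases le_total t u with htu | hut
    · exact hne u htu hur
    · simpa only [Nat.sub_sub_self (show u ≤ n by lia)] using hne' (n - u) (by lia) (by lia)
  · simpa only [show n - (l + 1) = n - l - 1 by lia] using (hl (by lia)).symm

theorem arrow_of_unshielded (hyx : G.adj y x) (hxz : ¬ G.adj x z) (hne : x ≠ z)
    (hyz : G.arrow y z) (hxy : H.headInto x y) : H.arrow y z := by
  have hadj := adj_of_arrow hyz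
  rw [hG.adj_eq hH] at hyx hxz hadj
  exact StableMAG.arrow_transfer hps hG hH
    (isDiscriminating_zero hH.isDirectedAncestral hyx hadj hxz hne) hxy hyz

theorem mem_an_of_arrow_of_min (hy : y ∈ G.an C) (hxy : G.arrow x y) (hxyH : H.arrow x y)
    (hmin : ∀ z ∈ G.an C, G.arrow x z → G.rank y ≤ G.rank z) : y ∈ H.an C := by
  -- By minimality of `y`, a child `z` of `y` chosen in the same way is not adjacent to `x`, so that
  -- the arrow `y → z` is shared by `H`.
  have hanc := hG.isDirectedAncestral
  induction hd : G.rank y using Nat.strong_induction_on generalizing x y with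
  | _ d ih =>
    subst hd
    by_cases hyC : y ∈ C
    · exact subset_an hyC
    obtain ⟨z, hz, hyz, hminz⟩ := exists_min_arrow hy hyC
    have hzy := hanc.rank_lt_rank (anc_of_arrow hyz)
    have hxz := anc_trans (anc_of_arrow hxy) (anc_of_arrow hyz)
    have hnot : ¬ G.adj x z := fun h =>
      (hmin z hz (hanc.arrow_of_anc_of_adj hxz h)).not_gt hzy
    have hne : x ≠ z := by
      rintro rfl
      exact hanc.not_anc_self hxz
    have hyzH := arrow_of_unshielded hps hG hH (hanc.adj_symm (adj_of_arrow hxy)) hnot hne hyz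
      (Or.inl hxyH)
    exact mem_an_of_arrow hyzH (ih _ hzy hz hyz hyzH hminz rfl)

end MixedGraph

/-! ### Markov equivalence -/

namespace MixedGraph

variable {V : Type} {ci : V → V → Set V → Prop} {G H : MixedGraph V} {A B C : Set V} {n : ℕ}
  {v : ℕ → V} [Finite V] (hps : PathStable ci) (hG : StableMAG ci G) (hH : StableMAG ci H)
include hps hG hH

theorem IsMinimal.mem_an_of_collider (h : G.IsMinimal C n v) {s : ℕ} (hs : 0 < s) (hsn : s < n)
    (hcol : G.collider (v (s - 1)) (v s) (v (s + 1))) : v s ∈ H.an C := by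
  by_cases hC : v s ∈ C
  · exact subset_an hC
  obtain ⟨y, hy, harrow, hmin⟩ := exists_min_arrow ((h.active s hs hsn).1 hcol) hC
  have harrowH := h.arrow_of_collider hps hG hH hs hsn hcol harrow hy
  exact mem_an_of_arrow harrowH (mem_an_of_arrow_of_min hps hG hH hy harrow harrowH hmin)

theorem IsMinimal.isConnecting (h : G.IsMinimal C n v) : H.IsConnecting C n v where
  injOn := h.injOn
  adj := hG.adj_eq hH ▸ h.adj
  active s hs hsn := by
    have hstatus := h.sameStatus hps hG hH hs hsn
    exact ⟨fun hcol => h.mem_an_of_collider hps hG hH hs hsn (hstatus.2 hcol),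
      fun hcol => (h.active s hs hsn).2 fun hcolG => hcol (hstatus.1 hcolG)⟩

theorem mSep_of_mSep (h : H.mSep A B C) : G.mSep A B C := by
  rw [mSep_iff] at h ⊢
  rintro ⟨n, v, hv, hA, hB⟩
  obtain ⟨m, w, hw, hw0, hwm⟩ := hv.exists_isMinimal
  exact h ⟨m, w, hw.isConnecting hps hG hH, hw0 ▸ hA, hwm ▸ hB⟩

end MixedGraph

theorem statement_9_general {V : Type} [Finite V] {ci : V → V → Set V → Prop}
    (hps : PathStable ci) : UniquenessProp ci := by
  intro G H hG hGmax hGadj hGup hGdown hH hHmax hHadj hHup hHdown A B C _ _ _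
  have hG' : StableMAG ci G := ⟨hG, hGmax, hGadj, hGup, hGdown⟩
  have hH' : StableMAG ci H := ⟨hH, hHmax, hHadj, hHup, hHdown⟩
  exact ⟨MixedGraph.mSep_of_mSep hps hH' hG', MixedGraph.mSep_of_mSep hps hG' hH'⟩

/-- Proposition 17(a) of Sadeghi–Soo. -/
theorem statement_9 {V : Type} [Fintype V]
    {Ω : Type} [MeasurableSpace Ω] [StandardBorelSpace Ω] [Nonempty Ω]
    (μ : Measure Ω) [IsProbabilityMeasure μ]
    {𝓧 : V → Type} [∀ v, MeasurableSpace (𝓧 v)]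
    (X : ∀ v, Ω → 𝓧 v) (hX : ∀ v, Measurable (X v))
    (hps : PathStable (ciP μ X hX)) :
    UniquenessProp (ciP μ X hX) :=
  statement_9_general hps
end

section
/- If a probability distribution P over variables (X_v)_{v∈V} is V-stable, then P satisfies the DAG-uniqueness property: any two DAGs with skeleton sk(P), w.r.t. each of which P satisfies ordered upward- and downward-stability, are Markov equivalent. -/
open MeasureTheory ProbabilityTheory

/-! Let `⟨i, k, j⟩` be an immorality of a DAG `G` as in the theorem. By ordered downward-stability
some `C ⊆ an(i, j)` gives `i ⫫ j | C`, and `k ∉ C` by acyclicity. If `k` were a parent of `i` or `j`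
in another such DAG `H`, ordered upward-stability would give `i ⫫ j | C ∪ {k}` too, contradicting
V-stability. So `G` and `H` have the same skeleton and the same immoralities.

That this implies Markov equivalence (Verma and Pearl) is seen on moral graphs: `a` and `b` are
connected given `C` in `G` iff they are joined by a path avoiding `C` in the moral graph on the
ancestral closure of `{a, b} ∪ C`. The moral graph on a given set of nodes is the same for `G` and
`H`, but the ancestral closures differ. Nodes outside the closure in `H` are removed from the one in
`G` one at a time, always taking a sink `v` for `H`. The moral neighbours of `v` form a clique, so a
path can bypass `v`. As an ancestor in `G`, `v` has a child `w` there, and every `G`-parent `u` of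
`v` is a parent of `w`, since `⟨u, v, w⟩` would otherwise be an immorality of `H` but not of `G`; so
`w` still marries the parents that `v` married.
-/

theorem reachable_of_isClique_neighborSet {V : Type*} {M N : SimpleGraph V} {v a b : V}
    (hv : M.IsClique (M.neighborSet v))
    (hMN : ∀ u w, u ≠ v → w ≠ v → M.Adj u w → N.Adj u w) (ha : a ≠ v) (hb : b ≠ v)
    (h : M.Reachable a b) : N.Reachable a b := by
  rw [SimpleGraph.reachable_iff_reflTransGen] at h
  suffices key : (b ≠ v → N.Reachable a b) ∧ (b = v → ∃ u, M.Adj u v ∧ N.Reachable a u) from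
    key.1 hb
  clear hb
  induction h with
  | refl => exact ⟨fun _ => .rfl, fun h => (ha h).elim⟩
  | @tail w x _ hwx ih =>
    refine ⟨fun hx => ?_, ?_⟩
    · by_cases hw : w = v
      · obtain ⟨u, huv, hau⟩ := ih.2 hw
        subst hw
        by_cases hux : u = x
        · exact hux ▸ hau
        · exact hau.trans (hMN u x huv.ne hx (hv huv.symm hwx hux)).reachable
      · exact (ih.1 hw).trans (hMN w x hw hx hwx).reachable
    · rintro rfl
      exact ⟨w, hwx, ih.1 hwx.ne⟩

namespace MixedGraph

variable {V : Type} {G H : MixedGraph V} {S T U W C : Set V} {a b i j k u v w x : V} {l : List V}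

namespace IsDAG

theorem adj_iff (hG : G.IsDAG) : G.adj u v ↔ G.arrow u v ∨ G.arrow v u := by
  simp only [adj, hG.1, or_false]

theorem collider_iff (hG : G.IsDAG) : G.collider u v w ↔ G.arrow u v ∧ G.arrow w v := by
  simp only [collider, headInto, hG.1, or_false]

theorem asymm (hG : G.IsDAG) (huv : G.arrow u v) : ¬ G.arrow v u :=
  fun hvu => hG.2 u (.tail (.single huv) hvu)

theorem arrow_of_adj (hG : G.IsDAG) (huv : G.arrow u v) (hvw : G.arrow v w) (h : G.adj u w) :
    G.arrow u w :=
  (hG.adj_iff.1 h).resolve_right fun hwu => hG.2 u (.tail (.tail (.single huv) hvw) hwu)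

theorem exists_sink [Finite V] (hG : G.IsDAG) (hS : S.Nonempty) :
    ∃ v ∈ S, ∀ w ∈ S, ¬ G.anc v w := by
  have : IsTrans V (Function.swap G.anc) := ⟨fun _ _ _ hvu hwv => hwv.trans hvu⟩
  have : Std.Irrefl (Function.swap G.anc) := ⟨hG.2⟩
  exact (Finite.wellFounded_of_trans_of_irrefl (Function.swap G.anc)).has_min S hS

end IsDAG

/-- `S` is ancestral: it contains the parents of all its nodes. -/
def IsAncestral (G : MixedGraph V) (S : Set V) : Prop :=
  ∀ ⦃u v⦄, G.arrow u v → v ∈ S → u ∈ S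

/-- The nodes of `S` together with all their ancestors, i.e. the smallest ancestral set
containing `S`. The condition on colliders in `Connecting C` is membership in `G.ancClosure C`. -/
def ancClosure (G : MixedGraph V) (S : Set V) : Set V :=
  {v | v ∈ S ∨ ∃ s ∈ S, G.anc v s}

theorem subset_ancClosure : S ⊆ G.ancClosure S := fun _ => Or.inl

theorem isAncestral_ancClosure : G.IsAncestral (G.ancClosure S) := by
  rintro u v huv (hv | ⟨s, hs, hvs⟩)
  · exact Or.inr ⟨v, hv, .single huv⟩
  · exact Or.inr ⟨s, hs, .head huv hvs⟩

theorem IsAncestral.ancClosure_subset (hU : G.IsAncestral U) (hSU : S ⊆ U) :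
    G.ancClosure S ⊆ U := by
  rintro v (hv | ⟨s, hs, hvs⟩)
  · exact hSU hv
  · induction hvs using Relation.TransGen.head_induction_on with
    | single h => exact hU h (hSU hs)
    | head h _ ih => exact hU h ih

theorem mem_ancClosure_insert :
    v ∈ G.ancClosure (insert a S) ↔ Relation.ReflTransGen G.arrow v a ∨ v ∈ G.ancClosure S := by
  simp only [ancClosure, anc, Set.mem_ofPred_eq, Set.mem_insert_iff, exists_eq_or_imp,
    Relation.reflTransGen_iff_eq_or_transGen, eq_comm (a := a)]
  tauto

theorem exists_arrow_of_mem_ancClosure (hv : v ∈ G.ancClosure S) (hvS : v ∉ S) :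
    ∃ w ∈ G.ancClosure S, G.arrow v w := by
  obtain ⟨s, hs, hvs⟩ := hv.resolve_left hvS
  obtain ⟨w, hvw, hws⟩ := Relation.TransGen.head'_iff.1 hvs
  rcases Relation.reflTransGen_iff_eq_or_transGen.1 hws with rfl | hws
  · exact ⟨_, subset_ancClosure hs, hvw⟩
  · exact ⟨w, Or.inr ⟨s, hs, hws⟩, hvw⟩

/-- The node `v` of a tripath `⟨u, v, w⟩` does not block a path given `C`: it satisfies the local
condition of `Connecting C`. -/
def ActiveAt (G : MixedGraph V) (C : Set V) (u v w : V) : Prop :=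
  (G.collider u v w → v ∈ G.ancClosure C) ∧ (¬ G.collider u v w → v ∉ C)

theorem IsDAG.activeAt_iff_notMem (hG : G.IsDAG) (h : G.arrow v u ∨ G.arrow v w) :
    G.ActiveAt C u v w ↔ v ∉ C := by
  have hcol : ¬ G.collider u v w := by
    rw [hG.collider_iff]
    exact fun hc => h.elim (hG.asymm hc.1) (hG.asymm hc.2)
  simp only [ActiveAt, hcol, false_imp_iff, true_and, not_false_eq_true, true_imp_iff]

theorem IsDAG.activeAt_iff_mem_ancClosure (hG : G.IsDAG) (hu : G.arrow u v) (hw : G.arrow w v) :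
    G.ActiveAt C u v w ↔ v ∈ G.ancClosure C := by
  simp only [ActiveAt, hG.collider_iff.2 ⟨hu, hw⟩, true_imp_iff, not_true, false_imp_iff, and_true]

theorem connecting_singleton : G.Connecting C [v] := by
  refine ⟨List.nodup_singleton v, List.isChain_singleton v, fun t _ _ _ h3 => ?_⟩
  simp at h3

theorem connecting_cons_cons :
    G.Connecting C (v :: u :: l) ↔
      v ∉ u :: l ∧ G.adj v u ∧ (∀ x ∈ l.head?, G.ActiveAt C v u x) ∧
        G.Connecting C (u :: l) := by
  constructor
  · rintro ⟨hnodup, hchain, hact⟩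
    rw [List.nodup_cons] at hnodup
    rw [List.Chain', List.isChain_cons_cons] at hchain
    refine ⟨hnodup.1, hchain.1, fun x hx => ?_, hnodup.2, hchain.2, fun t ht _ _ h3 => ?_⟩
    · obtain ⟨l, rfl⟩ := List.head?_eq_some_iff.1 hx
      exact hact 1 one_pos (by simp) (by simp) (by simp)
    · obtain ⟨t, rfl⟩ := Nat.exists_eq_add_of_lt ht
      exact hact (0 + t + 1 + 1) (by omega) (by simp_all) (by simp_all) (by simp_all)
  · rintro ⟨hv, hadj, hhead, hnodup, hchain, hact⟩
    refine ⟨List.nodup_cons.2 ⟨hv, hnodup⟩, List.isChain_cons_cons.2 ⟨hadj, hchain⟩,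
      fun t ht h1 h2 h3 => ?_⟩
    match t, l with
    | 1, x :: l => exact hhead x rfl
    | t + 2, l => exact hact (t + 1) (by omega) (by simp_all) (by simp_all) (by simp_all)

/-- There is a path from `a` to `b` that is connecting given `C`. -/
def Connects (G : MixedGraph V) (C : Set V) (a b : V) : Prop :=
  ∃ l, G.Connecting C (a :: l) ∧ (a :: l).getLast? = some b

theorem mSep_iff_forall_not_connects {A B : Set V} :
    G.mSep A B C ↔ ∀ a ∈ A, ∀ b ∈ B, ¬ G.Connects C a b := by
  constructor
  · exact fun h a ha b hb ⟨l, hl, hlast⟩ => h ⟨a :: l, hl, ⟨a, ha, rfl⟩, ⟨b, hb, hlast⟩⟩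
  · rintro h ⟨p, hp, ⟨a, ha, hhead⟩, ⟨b, hb, hlast⟩⟩
    obtain ⟨l, rfl⟩ := List.head?_eq_some_iff.1 hhead
    exact h a ha b hb ⟨l, hp, hlast⟩

/-- Like `Connects`, but the path stays connecting at its first node `a` when it is prolonged there
by a parent of `a`. Unlike `Connects`, this passes to final segments of the path, so that a
prolongation which meets the path again can be shortcut. -/
def ConnectsUpward (G : MixedGraph V) (C : Set V) (a b : V) : Prop :=
  ∃ l, G.Connecting C (a :: l) ∧ (a :: l).getLast? = some b ∧
    ∀ u ∈ l.head?, (G.arrow u a → a ∈ G.ancClosure C) ∧ (¬ G.arrow u a → a ∉ C)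

theorem connects_of_mem (hl : G.Connecting C (v :: l)) (hlast : (v :: l).getLast? = some b)
    (hw : w ∈ v :: l) : G.Connects C w b := by
  induction l generalizing v with
  | nil =>
    obtain rfl := List.mem_singleton.1 hw
    exact ⟨_, hl, hlast⟩
  | cons u l ih =>
    rcases List.mem_cons.1 hw with rfl | hw
    · exact ⟨_, hl, hlast⟩
    · exact ih (connecting_cons_cons.1 hl).2.2.2 (by rwa [List.getLast?_cons_cons] at hlast) hw

theorem connectsUpward_of_mem (hG : G.IsDAG) (hl : G.Connecting C (v :: l))
    (hlast : (v :: l).getLast? = some b)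
    (hup : ∀ u ∈ l.head?, (G.arrow u v → v ∈ G.ancClosure C) ∧ (¬ G.arrow u v → v ∉ C))
    (hw : w ∈ v :: l) : G.ConnectsUpward C w b := by
  induction l generalizing v with
  | nil =>
    obtain rfl := List.mem_singleton.1 hw
    exact ⟨_, hl, hlast, hup⟩
  | cons u l ih =>
    rcases List.mem_cons.1 hw with rfl | hw
    · exact ⟨_, hl, hlast, hup⟩
    obtain ⟨-, hadj, hact, hl'⟩ := connecting_cons_cons.1 hl
    refine ih hl' (by rwa [List.getLast?_cons_cons] at hlast) (fun x hx => ⟨fun hxu => ?_, ?_⟩) hw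
    · rcases hG.adj_iff.1 hadj with hvu | huv
      · exact (hG.activeAt_iff_mem_ancClosure hvu hxu).1 (hact x hx)
      · exact isAncestral_ancClosure huv ((hup u rfl).1 huv)
    · exact fun hxu => (hact x hx).2 fun hcol => hxu (hG.collider_iff.1 hcol).2

theorem connectsUpward_refl : G.ConnectsUpward C b b :=
  ⟨[], connecting_singleton, rfl, by simp⟩

theorem ConnectsUpward.connects (h : G.ConnectsUpward C a b) : G.Connects C a b :=
  let ⟨l, hl, hlast, _⟩ := h
  ⟨l, hl, hlast⟩

theorem ConnectsUpward.of_arrow (hG : G.IsDAG) (h : G.ConnectsUpward C v b) (hwv : G.arrow w v)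
    (hw : w ∉ C) : G.ConnectsUpward C w b := by
  obtain ⟨l, hl, hlast, hup⟩ := h
  by_cases hmem : w ∈ v :: l
  · exact connectsUpward_of_mem hG hl hlast hup hmem
  refine ⟨v :: l, connecting_cons_cons.2 ⟨hmem, Or.inl hwv, fun x hx => ?_, hl⟩, hlast, ?_⟩
  · by_cases hxv : G.arrow x v
    · exact (hG.activeAt_iff_mem_ancClosure hwv hxv).2 ((hup x hx).1 hxv)
    · exact ⟨fun hcol => (hxv (hG.collider_iff.1 hcol).2).elim, fun _ => (hup x hx).2 hxv⟩
  · rintro _ ⟨⟩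
    exact ⟨fun hvw => (hG.asymm hwv hvw).elim, fun _ => hw⟩

theorem Connecting.cons_of_arrow (hG : G.IsDAG) (hl : G.Connecting C (v :: l))
    (hvw : G.arrow v w) (hv : v ∉ C) (hw : w ∉ v :: l) : G.Connecting C (w :: v :: l) :=
  connecting_cons_cons.2
    ⟨hw, hG.adj_iff.2 (Or.inr hvw), fun _ _ => (hG.activeAt_iff_notMem (Or.inl hvw)).2 hv, hl⟩

theorem ConnectsUpward.of_arrow_of_mem_ancClosure (hG : G.IsDAG) (h : G.ConnectsUpward C v b)
    (hvw : G.arrow v w) (hv : v ∉ C) (hw : w ∈ G.ancClosure C) : G.ConnectsUpward C w b := by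
  obtain ⟨l, hl, hlast, hup⟩ := h
  by_cases hmem : w ∈ v :: l
  · exact connectsUpward_of_mem hG hl hlast hup hmem
  · refine ⟨v :: l, hl.cons_of_arrow hG hvw hv hmem, hlast, ?_⟩
    rintro _ ⟨⟩
    exact ⟨fun _ => hw, fun hwv => (hwv hvw).elim⟩

theorem Connects.of_arrow (hG : G.IsDAG) (h : G.Connects C v b) (hvw : G.arrow v w)
    (hv : v ∉ C) : G.Connects C w b := by
  obtain ⟨l, hl, hlast⟩ := h
  by_cases hmem : w ∈ v :: l
  · exact connects_of_mem hl hlast hmem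
  · exact ⟨v :: l, hl.cons_of_arrow hG hvw hv hmem, hlast⟩

theorem Connects.of_reflTransGen (hG : G.IsDAG) (h : G.Connects C v b)
    (hva : Relation.ReflTransGen G.arrow v a) (hv : v ∉ G.ancClosure C) : G.Connects C a b := by
  induction hva using Relation.ReflTransGen.head_induction_on with
  | refl => exact h
  | head hvw _ ih =>
    exact ih (h.of_arrow hG hvw fun hvC => hv (subset_ancClosure hvC))
      fun hw => hv (isAncestral_ancClosure hvw hw)

theorem connectsUpward_of_reflTransGen (hG : G.IsDAG) (hvb : Relation.ReflTransGen G.arrow v b)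
    (hv : v ∉ G.ancClosure C) : G.ConnectsUpward C v b := by
  induction hvb using Relation.ReflTransGen.head_induction_on with
  | refl => exact connectsUpward_refl
  | head hvw _ ih =>
    exact (ih fun hw => hv (isAncestral_ancClosure hvw hw)).of_arrow hG hvw
      fun hvC => hv (subset_ancClosure hvC)

/-- The moral graph of the subgraph induced by `T`, with the nodes of `C` isolated: distinct nodes
of `T \ C` are joined if there is an arrow between them or they have a common child in `T` (which
may lie in `C`). Reachability in it is non-separation by `C` in the moral graph. -/
def moralGraph (G : MixedGraph V) (T C : Set V) : SimpleGraph V where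
  Adj u v := u ≠ v ∧ u ∈ T \ C ∧ v ∈ T \ C ∧
    (G.arrow u v ∨ G.arrow v u ∨ ∃ w ∈ T, G.arrow u w ∧ G.arrow v w)
  symm := ⟨fun _ _ ⟨hne, hu, hv, h⟩ => ⟨hne.symm, hv, hu, by
    rwa [or_left_comm, exists_congr fun _ => and_congr_right fun _ => and_comm]⟩⟩
  loopless := ⟨fun _ h => h.1 rfl⟩

theorem moralGraph_mono (hTU : T ⊆ U) : G.moralGraph T C ≤ G.moralGraph U C :=
  fun _ _ ⟨hne, hu, hv, h⟩ => ⟨hne, ⟨hTU hu.1, hu.2⟩, ⟨hTU hv.1, hv.2⟩,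
    h.imp_right (Or.imp_right fun ⟨w, hw, harr⟩ => ⟨w, hTU hw, harr⟩)⟩

theorem connects_or_connectsUpward_of_arrow (hG : G.IsDAG) (h : G.ConnectsUpward C v b)
    (hvw : G.arrow v w) (hv : v ∉ C) (hw : w ∈ G.ancClosure (insert a (insert b C))) :
    G.Connects C a b ∨ G.ConnectsUpward C w b := by
  by_cases hwC : w ∈ G.ancClosure C
  · exact Or.inr (h.of_arrow_of_mem_ancClosure hG hvw hv hwC)
  rw [mem_ancClosure_insert, mem_ancClosure_insert] at hw
  rcases hw with hwa | hwb | hw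
  · exact Or.inl ((h.connects.of_arrow hG hvw hv).of_reflTransGen hG hwa hwC)
  · exact Or.inr (connectsUpward_of_reflTransGen hG hwb hwC)
  · exact (hwC hw).elim

theorem connects_or_connectsUpward_of_reachable_moralGraph (hG : G.IsDAG)
    (h : (G.moralGraph (G.ancClosure (insert a (insert b C))) C).Reachable v b) :
    G.Connects C a b ∨ G.ConnectsUpward C v b := by
  rw [SimpleGraph.reachable_iff_reflTransGen] at h
  induction h using Relation.ReflTransGen.head_induction_on with
  | refl => exact Or.inr connectsUpward_refl
  | head hvu _ ih =>
    obtain ⟨-, hv, hu, hedge⟩ := hvu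
    refine ih.elim Or.inl fun ih => ?_
    rcases hedge with hvu | huv | ⟨w, hw, hvw, huw⟩
    · exact Or.inr (ih.of_arrow hG hvu hv.2)
    · exact connects_or_connectsUpward_of_arrow hG ih huv hu.2 hv.1
    · exact (connects_or_connectsUpward_of_arrow hG ih huw hu.2 hw).imp_right
        (·.of_arrow hG hvw hv.2)

theorem mem_of_connecting_of_arrow (hG : G.IsDAG) (hU : G.IsAncestral U) (hCU : C ⊆ U)
    (hl : G.Connecting C (v :: u :: l)) (hlast : (v :: u :: l).getLast? = some b) (hb : b ∈ U)
    (hvu : G.arrow v u) : u ∈ U := by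
  induction l generalizing v u with
  | nil =>
    obtain rfl : u = b := by simpa using hlast
    exact hb
  | cons x l ih =>
    obtain ⟨-, -, hact, hl'⟩ := connecting_cons_cons.1 hl
    rcases hG.adj_iff.1 (connecting_cons_cons.1 hl').2.1 with hux | hxu
    · exact hU hux (ih hl' (by rwa [List.getLast?_cons_cons] at hlast) hux)
    · exact hU.ancClosure_subset hCU ((hG.activeAt_iff_mem_ancClosure hvu hxu).1 (hact x rfl))

theorem notMem_of_connecting_of_arrow (hG : G.IsDAG) (hl : G.Connecting C (u :: v :: l))
    (hlast : (u :: v :: l).getLast? = some b) (hb : b ∉ C) (hvu : G.arrow v u) : v ∉ C := by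
  cases l with
  | nil =>
    obtain rfl : v = b := by simpa using hlast
    exact hb
  | cons x l =>
    exact (hG.activeAt_iff_notMem (Or.inl hvu)).1 ((connecting_cons_cons.1 hl).2.2.1 x rfl)

theorem reachable_moralGraph_of_connecting (hG : G.IsDAG) (hU : G.IsAncestral U) (hCU : C ⊆ U)
    (hbU : b ∈ U) (hbC : b ∉ C) : ∀ {l : List V} {v : V}, v ∈ U → v ∉ C → G.Connecting C (v :: l) →
      (v :: l).getLast? = some b → (G.moralGraph U C).Reachable v b
  | [], v, _, _, _, hlast => by
    obtain rfl : v = b := by simpa using hlast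
    rfl
  | u :: l, v, hvU, hvC, hl, hlast => by
    obtain ⟨hmem, hadj, hact, hl'⟩ := connecting_cons_cons.1 hl
    rw [hG.adj_iff] at hadj
    have huU : u ∈ U := hadj.elim (mem_of_connecting_of_arrow hG hU hCU hl hlast hbU) (hU · hvU)
    rw [List.getLast?_cons_cons] at hlast
    by_cases huC : u ∈ C
    · match l with
      | [] =>
        obtain rfl : u = b := by simpa using hlast
        exact (hbC huC).elim
      | x :: l =>
        obtain ⟨-, -, -, hl''⟩ := connecting_cons_cons.1 hl'
        obtain ⟨hvu, hxu⟩ : G.arrow v u ∧ G.arrow x u := by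
          rw [← hG.collider_iff]
          by_contra hcol
          exact (hact x rfl).2 hcol huC
        have hxC : x ∉ C := notMem_of_connecting_of_arrow hG hl' hlast hbC hxu
        have hvx : (G.moralGraph U C).Adj v x :=
          ⟨by rintro rfl; simp at hmem, ⟨hvU, hvC⟩, ⟨hU hxu huU, hxC⟩,
            Or.inr (Or.inr ⟨u, huU, hvu, hxu⟩)⟩
        exact hvx.reachable.trans (reachable_moralGraph_of_connecting hG hU hCU hbU hbC
          (hU hxu huU) hxC hl'' (by rwa [List.getLast?_cons_cons] at hlast))
    · have hvu : (G.moralGraph U C).Adj v u :=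
        ⟨by rintro rfl; simp at hmem, ⟨hvU, hvC⟩, ⟨huU, huC⟩, by tauto⟩
      exact hvu.reachable.trans
        (reachable_moralGraph_of_connecting hG hU hCU hbU hbC huU huC hl' hlast)

theorem connects_iff_reachable_moralGraph (hG : G.IsDAG) (ha : a ∉ C) (hb : b ∉ C) :
    G.Connects C a b ↔
      (G.moralGraph (G.ancClosure (insert a (insert b C))) C).Reachable a b := by
  constructor
  · rintro ⟨l, hl, hlast⟩
    have hsub : insert a (insert b C) ⊆ G.ancClosure (insert a (insert b C)) := subset_ancClosure
    exact reachable_moralGraph_of_connecting hG isAncestral_ancClosure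
      (((Set.subset_insert _ _).trans (Set.subset_insert _ _)).trans hsub) (hsub (by simp)) hb
      (hsub (by simp)) ha hl hlast
  · exact fun h => (connects_or_connectsUpward_of_reachable_moralGraph hG h).elim id
      ConnectsUpward.connects

/-- `⟨i, k, j⟩` is an immorality (unshielded collider) of `G`. -/
def Immorality (G : MixedGraph V) (i k j : V) : Prop :=
  i ≠ j ∧ ¬ G.adj i j ∧ G.arrow i k ∧ G.arrow j k

/-- The Verma–Pearl criterion for Markov equivalence of DAGs: the same skeleton and the same
immoralities. -/
structure SameSkeletonAndImmoralities (G H : MixedGraph V) : Prop where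
  adj_iff (i j : V) : G.adj i j ↔ H.adj i j
  immorality_iff (i k j : V) : G.Immorality i k j ↔ H.Immorality i k j

namespace SameSkeletonAndImmoralities

theorem symm (h : G.SameSkeletonAndImmoralities H) : H.SameSkeletonAndImmoralities G :=
  ⟨fun i j => (h.adj_iff i j).symm, fun i k j => (h.immorality_iff i k j).symm⟩

theorem moralGraph_le (hG : G.IsDAG) (hH : H.IsDAG) (h : G.SameSkeletonAndImmoralities H) :
    G.moralGraph T C ≤ H.moralGraph T C := by
  rintro u v ⟨hne, hu, hv, hedge⟩
  refine ⟨hne, hu, hv, ?_⟩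
  rw [← or_assoc, ← hG.adj_iff] at hedge
  rw [← or_assoc, ← hH.adj_iff, ← h.adj_iff]
  by_cases hadj : G.adj u v
  · exact Or.inl hadj
  · obtain ⟨w, hw, huw, hvw⟩ := hedge.resolve_left hadj
    exact Or.inr ⟨w, hw, ((h.immorality_iff u w v).1 ⟨hne, hadj, huw, hvw⟩).2.2⟩

theorem moralGraph_eq (hG : G.IsDAG) (hH : H.IsDAG) (h : G.SameSkeletonAndImmoralities H) :
    G.moralGraph T C = H.moralGraph T C :=
  le_antisymm (h.moralGraph_le hG hH) (h.symm.moralGraph_le hH hG)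

theorem arrow_of_arrow_sink (hG : G.IsDAG) (hH : H.IsDAG) (h : G.SameSkeletonAndImmoralities H)
    (hsink : ∀ x ∈ T, ¬ H.arrow v x) (hu : u ∈ T) (hw : w ∈ T) (huv : G.arrow u v)
    (hvw : G.arrow v w) : G.arrow u w := by
  have huv' : H.arrow u v :=
    (hH.adj_iff.1 ((h.adj_iff u v).1 (hG.adj_iff.2 (.inl huv)))).resolve_right (hsink u hu)
  have hwv' : H.arrow w v :=
    (hH.adj_iff.1 ((h.adj_iff w v).1 (hG.adj_iff.2 (.inr hvw)))).resolve_right (hsink w hw)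
  refine hG.arrow_of_adj huv hvw (by_contra fun hadj => ?_)
  have hne : u ≠ w := by
    rintro rfl
    exact hG.asymm huv hvw
  have himm : G.Immorality u v w :=
    (h.immorality_iff u v w).2 ⟨hne, (h.adj_iff u w).not.1 hadj, huv', hwv'⟩
  exact hG.asymm hvw himm.2.2.2

theorem isClique_neighborSet_sink (hG : G.IsDAG) (hH : H.IsDAG)
    (h : G.SameSkeletonAndImmoralities H) (hv : v ∈ T) (hsink : ∀ x ∈ T, ¬ H.arrow v x) :
    (G.moralGraph T C).IsClique ((G.moralGraph T C).neighborSet v) := by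
  rw [h.moralGraph_eq hG hH]
  have hpar : ∀ u, (H.moralGraph T C).Adj v u → H.arrow u v := by
    rintro u ⟨-, -, hu, hvu | huv | ⟨x, hx, hvx, -⟩⟩
    · exact (hsink u hu.1 hvu).elim
    · exact huv
    · exact (hsink x hx hvx).elim
  exact fun u hu w hw hne =>
    ⟨hne, hu.2.2.1, hw.2.2.1, .inr (.inr ⟨v, hv, hpar u hu, hpar w hw⟩)⟩

theorem reachable_moralGraph_diff_sink (hG : G.IsDAG) (hH : H.IsDAG)
    (h : G.SameSkeletonAndImmoralities H) (hv : v ∈ T) (hsink : ∀ x ∈ T, ¬ H.arrow v x)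
    (hw : w ∈ T) (hvw : G.arrow v w) (ha : a ≠ v) (hb : b ≠ v)
    (hab : (G.moralGraph T C).Reachable a b) : (G.moralGraph (T \ {v}) C).Reachable a b := by
  refine reachable_of_isClique_neighborSet (h.isClique_neighborSet_sink hG hH hv hsink) ?_ ha hb hab
  rintro p q hp hq ⟨hne, hpT, hqT, hedge⟩
  refine ⟨hne, ⟨⟨hpT.1, hp⟩, hpT.2⟩, ⟨⟨hqT.1, hq⟩, hqT.2⟩, hedge.imp_right (Or.imp_right ?_)⟩
  rintro ⟨x, hx, hpx, hqx⟩
  by_cases hxv : x = v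
  · subst hxv
    have hchild : ∀ u ∈ T, G.arrow u x → G.arrow u w := fun u hu hux =>
      h.arrow_of_arrow_sink hG hH hsink hu hw hux hvw
    exact ⟨w, ⟨hw, by rintro rfl; exact hG.asymm hvw hvw⟩, hchild p hpT.1 hpx, hchild q hqT.1 hqx⟩
  · exact ⟨x, ⟨hx, hxv⟩, hpx, hqx⟩

theorem exists_arrow_diff_sink (hG : G.IsDAG) (hH : H.IsDAG)
    (h : G.SameSkeletonAndImmoralities H) (hT : ∀ u ∈ T, u ∉ W → ∃ w ∈ T, G.arrow u w)
    (hsink : ∀ x ∈ T, ¬ H.arrow v x) (hw : w ∈ T) (hvw : G.arrow v w) :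
    ∀ u ∈ T \ {v}, u ∉ W → ∃ x ∈ T \ {v}, G.arrow u x := by
  rintro u ⟨hu, -⟩ huW
  obtain ⟨x, hx, hux⟩ := hT u hu huW
  by_cases hxv : x = v
  · subst hxv
    exact ⟨w, ⟨hw, by rintro rfl; exact hG.asymm hvw hvw⟩,
      h.arrow_of_arrow_sink hG hH hsink hu hw hux hvw⟩
  · exact ⟨x, ⟨hx, hxv⟩, hux⟩

theorem reachable_moralGraph_inter [Finite V] (hG : G.IsDAG) (hH : H.IsDAG)
    (h : G.SameSkeletonAndImmoralities H) (hT : ∀ u ∈ T, u ∉ W → ∃ w ∈ T, G.arrow u w)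
    (hW : H.IsAncestral W) (ha : a ∈ W) (hb : b ∈ W)
    (hab : (G.moralGraph T C).Reachable a b) : (G.moralGraph (T ∩ W) C).Reachable a b := by
  induction T using WellFoundedLT.induction with
  | ind T ih =>
    by_cases hTW : T ⊆ W
    · rwa [Set.inter_eq_left.2 hTW]
    obtain ⟨v, ⟨hvT, hvW⟩, hmax⟩ := hH.exists_sink (Set.sdiff_nonempty.2 hTW)
    have hsink : ∀ x ∈ T, ¬ H.arrow v x := fun x hx hvx =>
      hmax x ⟨hx, fun hxW => hvW (hW hvx hxW)⟩ (.single hvx)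
    obtain ⟨w, hw, hvw⟩ := hT v hvT hvW
    have hinter : (T \ {v}) ∩ W = T ∩ W := by
      rw [← Set.inter_sdiff_right_comm, Set.sdiff_singleton_eq_self fun hv => hvW hv.2]
    rw [← hinter]
    exact ih (T \ {v}) (Set.sdiff_singleton_ssubset.2 hvT)
      (h.exists_arrow_diff_sink hG hH hT hsink hw hvw)
      (h.reachable_moralGraph_diff_sink hG hH hvT hsink hw hvw
        (ne_of_mem_of_not_mem ha hvW) (ne_of_mem_of_not_mem hb hvW) hab)

theorem connects [Finite V] (hG : G.IsDAG) (hH : H.IsDAG) (h : G.SameSkeletonAndImmoralities H)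
    (ha : a ∉ C) (hb : b ∉ C) (hab : G.Connects C a b) : H.Connects C a b := by
  rw [connects_iff_reachable_moralGraph hG ha hb] at hab
  rw [connects_iff_reachable_moralGraph hH ha hb, ← h.moralGraph_eq hG hH]
  set S : Set V := insert a (insert b C)
  have hS : S ⊆ H.ancClosure S := subset_ancClosure
  have hchild : ∀ u ∈ G.ancClosure S, u ∉ H.ancClosure S → ∃ w ∈ G.ancClosure S, G.arrow u w :=
    fun u hu huH => exists_arrow_of_mem_ancClosure hu fun huS => huH (hS huS)
  exact (h.reachable_moralGraph_inter hG hH hchild isAncestral_ancClosure (hS (by simp [S]))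
    (hS (by simp [S])) hab).mono (moralGraph_mono Set.inter_subset_right)

theorem markovEquiv [Finite V] (hG : G.IsDAG) (hH : H.IsDAG)
    (h : G.SameSkeletonAndImmoralities H) : G.MarkovEquiv H := by
  intro A B C _ hAC hBC
  rw [mSep_iff_forall_not_connects, mSep_iff_forall_not_connects]
  refine forall₂_congr fun a ha => forall₂_congr fun b hb => not_congr ⟨?_, ?_⟩
  · exact h.connects hG hH (hAC.notMem_of_mem_left ha) (hBC.notMem_of_mem_left hb)
  · exact h.symm.connects hH hG (hAC.notMem_of_mem_left ha) (hBC.notMem_of_mem_left hb)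

end SameSkeletonAndImmoralities

variable {ci : V → V → Set V → Prop}

theorem exists_ci_subset_anSet [Finite V] (hG : G.IsDAG) (hdown : DownStab G.minLt ci)
    (hij : i ≠ j) (h : ∃ C, i ∉ C ∧ j ∉ C ∧ ci i j C) : ∃ C ⊆ G.anSet i j, ci i j C := by
  obtain ⟨C, ⟨hiC, hjC, hC⟩, hmin⟩ :=
    exists_minimal_of_wellFoundedLT (fun C => i ∉ C ∧ j ∉ C ∧ ci i j C) h
  refine ⟨C, by_contra fun hsub => ?_, hC⟩
  obtain ⟨k, ⟨hkC, hk⟩, hsink⟩ := hG.exists_sink (Set.sdiff_nonempty.2 hsub)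
  have hnotAnc : ¬ (G.anc k i ∨ G.anc k j) := fun hanc =>
    hk ⟨hanc, ne_of_mem_of_not_mem hkC hiC, ne_of_mem_of_not_mem hkC hjC⟩
  have hsinkC : ∀ l ∈ C \ {k}, ¬ G.anc k l := fun l hl hkl =>
    hsink l ⟨hl.1, fun hlan => hnotAnc (hlan.1.imp hkl.trans hkl.trans)⟩ hkl
  have hCk : ci i j (C \ {k}) := hdown i j C hij hiC hjC hC k (fun hki => hnotAnc (.inl hki))
    (fun hkj => hnotAnc (.inr hkj)) hsinkC
  exact (hmin ⟨fun hi => hiC hi.1, fun hj => hjC hj.1, hCk⟩ Set.sdiff_subset hkC).2 rfl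

theorem Immorality.of_vStable [Finite V] (hvs : VStable ci) (hG : G.IsDAG)
    (hGsk : ∀ i j, G.adj i j ↔ skP ci i j) (hdown : DownStab G.minLt ci) (hH : H.IsDAG)
    (hHsk : ∀ i j, H.adj i j ↔ skP ci i j) (hup : UpStab H.minLt ci)
    (himm : G.Immorality i k j) : H.Immorality i k j := by
  obtain ⟨hij, hadj, hik, hjk⟩ := himm
  have hskik : skP ci i k := (hGsk i k).1 (Or.inl hik)
  have hskjk : skP ci j k := (hGsk j k).1 (Or.inl hjk)
  have hskkj : skP ci k j := (hGsk k j).1 (Or.inr (Or.inl hjk))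
  rw [hGsk] at hadj
  obtain ⟨C, hCan, hC⟩ := exists_ci_subset_anSet hG hdown hij (by_contra fun h => hadj ⟨hij, h⟩)
  have hiC : i ∉ C := fun hi => (hCan hi).2.1 rfl
  have hjC : j ∉ C := fun hj => (hCan hj).2.2 rfl
  have hkC : k ∉ C := fun hk => (hCan hk).1.elim (fun hki => hG.2 k (.tail hki hik))
    fun hkj => hG.2 k (.tail hkj hjk)
  have hnotParent : ¬ (H.arrow k i ∨ H.arrow k j) := fun hk =>
    hvs ⟨i, k, j, C, hij, hskik.1, hskjk.1, hskik, hskkj, hadj, hiC, hjC, hkC, hC,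
      hup i j C hij hiC hjC hC k hskik.1.symm hskkj.1 (hk.imp .single .single)⟩
  rw [not_or] at hnotParent
  exact ⟨hij, (hHsk i j).not.2 hadj,
    (hH.adj_iff.1 ((hHsk i k).2 hskik)).resolve_right hnotParent.1,
    (hH.adj_iff.1 ((hHsk j k).2 hskjk)).resolve_right hnotParent.2⟩

end MixedGraph

theorem statement_10_general {V : Type} [Finite V] {ci : V → V → Set V → Prop}
    (hvs : VStable ci) : DAGUniquenessProp ci := by
  intro G H hG hGsk hGup hGdown hH hHsk hHup hHdown
  have hGH : G.SameSkeletonAndImmoralities H :=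
    { adj_iff i j := (hGsk i j).trans (hHsk i j).symm
      immorality_iff i k j :=
        ⟨.of_vStable hvs hG hGsk hGdown hH hHsk hHup, .of_vStable hvs hH hHsk hHdown hG hGsk hGup⟩ }
  exact hGH.markovEquiv hG hH

/-- Proposition 17(b) of Sadeghi–Soo. -/
theorem statement_10 {V : Type} [Fintype V]
    {Ω : Type} [MeasurableSpace Ω] [StandardBorelSpace Ω] [Nonempty Ω]
    (μ : Measure Ω) [IsProbabilityMeasure μ]
    {𝓧 : V → Type} [∀ v, MeasurableSpace (𝓧 v)]
    (X : ∀ v, Ω → 𝓧 v) (hX : ∀ v, Measurable (X v))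
    (hvs : VStable (ciP μ X hX)) :
    DAGUniquenessProp (ciP μ X hX) :=
  statement_10_general hvs
end
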